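/- arXiv:gr-qc/0609074 — 2 statements merged into one kernel-verified Lean document; each statement's English description precedes it below -/
import Mathlib

section
/- Suppose there exists η̂ > 0 such that σ'(η) ≥ 1/(4+2l) + ((7+4l)/(4+2l))·σ(η) for all 0 < η ≤ η̂. Then every solution of the static Einstein–Vlasov equations has finite radius and finite mass: if (m,η) is a solution whose maximal interval of definition (with η > 0 and 0 < 2m(r) < r) is (r₁,R), then R < ∞ and sup_{r₁<r<R} m(r) < ∞. -/
open Filter Set MeasureTheory

/-- The kinetic integrals `g_i(η) = ∫_{e^{-η}}^1 φ(ℰ) [(ℰ² - e^{-2η})/2]^i dℰ`. -/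
noncomputable def gfun (φ : ℝ → ℝ) (i η : ℝ) : ℝ :=
  ∫ E in Real.exp (-η)..1, φ E * (((E ^ 2 - Real.exp (-2 * η)) / 2) ^ i)

/-- The constant `a = 2^{l+3/2} π^{3/2} Γ(l+1) / ((l+3/2) Γ(l+3/2))`. -/
noncomputable def acoef (l : ℝ) : ℝ :=
  (2 : ℝ) ^ (l + 3 / 2) * Real.pi ^ ((3 : ℝ) / 2) * Real.Gamma (l + 1) /
    ((l + 3 / 2) * Real.Gamma (l + 3 / 2))

/-- The radial pressure `p_rad(r,η) = a r^{2l} e^{(2l+4)η} g_{l+3/2}(η)`. -/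
noncomputable def pRad (φ : ℝ → ℝ) (l r η : ℝ) : ℝ :=
  acoef l * r ^ (2 * l) * Real.exp ((2 * l + 4) * η) * gfun φ (l + 3 / 2) η

/-- The energy density `ρ(r,η) = (l+3/2) a r^{2l} e^{(2l+4)η} [2g_{l+3/2}(η) + e^{-2η} g_{l+1/2}(η)]`. -/
noncomputable def rhoFun (φ : ℝ → ℝ) (l r η : ℝ) : ℝ :=
  (l + 3 / 2) * acoef l * r ^ (2 * l) * Real.exp ((2 * l + 4) * η) *
    (2 * gfun φ (l + 3 / 2) η + Real.exp (-2 * η) * gfun φ (l + 1 / 2) η)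

/-- `σ(η) = p_rad/ρ = (1/(3+2l)) g_{l+3/2}/(g_{l+3/2} + (1/2)e^{-2η} g_{l+1/2})`. -/
noncomputable def sigmaFun (φ : ℝ → ℝ) (l η : ℝ) : ℝ :=
  (1 / (3 + 2 * l)) * gfun φ (l + 3 / 2) η /
    (gfun φ (l + 3 / 2) η + (1 / 2) * Real.exp (-2 * η) * gfun φ (l + 1 / 2) η)

/-- A solution of the static Einstein–Vlasov equations on the interval
`{r | r₁ < r ∧ r < R}` (`R` possibly `∞`): a pair of `C¹` functions `m, η` with
`η > 0`, `0 < 2m < r`, satisfying `r m' = 4π r³ ρ` and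
`r η' = -(1 - 2m/r)⁻¹ (m/r + 4π r² p_rad)`. -/
def IsEVSolution (φ : ℝ → ℝ) (l : ℝ) (m ηf : ℝ → ℝ) (r₁ : ℝ) (R : EReal) : Prop :=
  ∀ r : ℝ, r₁ < r → (r : EReal) < R →
    0 < ηf r ∧ 0 < m r ∧ 2 * m r < r ∧
    HasDerivAt m (4 * Real.pi * r ^ 2 * rhoFun φ l r (ηf r)) r ∧
    HasDerivAt ηf
      (-((1 - 2 * m r / r)⁻¹ * (m r / r + 4 * Real.pi * r ^ 2 * pRad φ l r (ηf r))) / r) r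

/-!
In the homology variables `u = 4πr³ρ/m` and `v = m/((r - 2m)σ)` the equations become an
autonomous system in `log r` whose coefficients depend only on `σ(η)` and `σ'(η)`. Put
`N = 3 + 2l`; the hypothesis reads `1 + (2N + 1)σ ≤ (N + 1)σ'`, and then

* `(log u + N log v)' ≥ (N - 1)u`, so `u v ^ N` increases;
* `(log v)' ≥ κ v - 1` with `κ > 0`, a Riccati inequality, so a solution living for all large
  `r` has `v` bounded;
* `(log v)' ≥ 1` wherever `u ≥ 2`.

By the first two, `u → ∞` on an infinite interval; by the third, `v → ∞` too, a contradiction.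
Hence `R < ∞`, and `2m < r` bounds the mass. The inequality for `σ'` is available once `η ≤ η̂`.
As `η` decreases along a solution, this holds eventually: otherwise `ρ ≥ c r ^ (2l)` with `c > 0`,
and `m` outgrows `r / 2`.
-/

/-! ### Elasticities -/

/-- `f` has elasticity `a` at `r`, that is `r f'(r) = a f(r)` (for `r ≠ 0`): the derivative of
`log f` with respect to `log r`, written so that no logarithm of a possibly vanishing `f` is
taken. -/
def HasElasticityAt (f : ℝ → ℝ) (a r : ℝ) : Prop :=
  HasDerivAt f (f r * a / r) r

namespace HasElasticityAt

variable {f g : ℝ → ℝ} {a b r : ℝ}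

lemma const (c r : ℝ) : HasElasticityAt (fun _ => c) 0 r :=
  (hasDerivAt_const r c).congr_deriv (by simp)

lemma id (hr : r ≠ 0) : HasElasticityAt (fun x => x) 1 r :=
  (hasDerivAt_id' r).congr_deriv (by field_simp)

lemma mul (hf : HasElasticityAt f a r) (hg : HasElasticityAt g b r) :
    HasElasticityAt (fun x => f x * g x) (a + b) r :=
  (HasDerivAt.fun_mul hf hg).congr_deriv (by ring)

lemma div (hf : HasElasticityAt f a r) (hg : HasElasticityAt g b r) (hgr : g r ≠ 0) :
    HasElasticityAt (fun x => f x / g x) (a - b) r :=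
  (HasDerivAt.fun_div hf hg hgr).congr_deriv (by field_simp)

lemma rpow_const (hf : HasElasticityAt f a r) (hfr : f r ≠ 0) (p : ℝ) :
    HasElasticityAt (fun x => f x ^ p) (p * a) r := by
  refine (HasDerivAt.rpow_const hf (Or.inl hfr)).congr_deriv ?_
  rw [Real.rpow_sub_one hfr]
  field_simp

lemma comp {h : ℝ → ℝ} {p q : ℝ} (hg : HasDerivAt g (g (h r) * p) (h r))
    (hh : HasDerivAt h (q / r) r) : HasElasticityAt (fun x => g (h x)) (p * q) r :=
  (HasDerivAt.comp r hg hh).congr_deriv (by ring)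

lemma congr_elasticity (hf : HasElasticityAt f a r) (hab : a = b) : HasElasticityAt f b r :=
  hab ▸ hf

lemma congr_of_eventuallyEq (hf : HasElasticityAt f a r) (hfg : g =ᶠ[nhds r] f) :
    HasElasticityAt g a r := by
  rw [HasElasticityAt, hfg.eq_of_nhds]
  exact HasDerivAt.congr_of_eventuallyEq hf hfg

end HasElasticityAt

lemma mul_div_rpow_le_of_mul_le_mul_deriv {f f' : ℝ → ℝ} {a c r : ℝ} (ha : 0 < a)
    (hf : ∀ x ≥ a, HasDerivAt f (f' x) x) (hf' : ∀ x ≥ a, c * f x ≤ x * f' x) (hr : a ≤ r) :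
    f a * (r / a) ^ c ≤ f r := by
  have hderiv : ∀ x ∈ Ici a,
      HasDerivAt (fun x => f x * x ^ (-c)) (x ^ (-c - 1) * (x * f' x - c * f x)) x := by
    intro x (hx : a ≤ x)
    have hx₀ : x ≠ 0 := (ha.trans_le hx).ne'
    refine ((hf x hx).mul (Real.hasDerivAt_rpow_const (Or.inl hx₀))).congr_deriv ?_
    rw [Real.rpow_sub_one hx₀]
    field_simp
    ring
  have hmono : MonotoneOn (fun x => f x * x ^ (-c)) (Ici a) := by
    refine monotoneOn_of_hasDerivWithinAt_nonneg (convex_Ici a)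
      (fun x hx => (hderiv x hx).continuousAt.continuousWithinAt)
      (fun x hx => (hderiv x (interior_subset hx)).hasDerivWithinAt) fun x hx => ?_
    have hx : a ≤ x := interior_subset hx
    exact mul_nonneg (Real.rpow_nonneg (ha.trans_le hx).le _) (sub_nonneg.2 (hf' x hx))
  have hr₀ : 0 < r := ha.trans_le hr
  have hle : f a * a ^ (-c) ≤ f r * r ^ (-c) := hmono self_mem_Ici hr hr
  calc f a * (r / a) ^ c = f a * a ^ (-c) * r ^ c := by
        rw [Real.div_rpow hr₀.le ha.le, Real.rpow_neg ha.le]; ring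
    _ ≤ f r * r ^ (-c) * r ^ c := by gcongr
    _ = f r := by rw [mul_assoc, ← Real.rpow_add hr₀, neg_add_cancel, Real.rpow_zero, mul_one]

lemma tendsto_atTop_of_mul_le_mul_deriv {f f' : ℝ → ℝ} {a c : ℝ} (ha : 0 < a) (hc : 0 < c)
    (hfa : 0 < f a) (hf : ∀ x ≥ a, HasDerivAt f (f' x) x) (hf' : ∀ x ≥ a, c * f x ≤ x * f' x) :
    Tendsto f atTop atTop := by
  have hpow : Tendsto (fun r => f a * (r / a) ^ c) atTop atTop :=
    ((tendsto_rpow_atTop hc).comp (tendsto_id.atTop_div_const ha)).const_mul_atTop hfa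
  refine tendsto_atTop_mono' _ ?_ hpow
  filter_upwards [eventually_ge_atTop a] with r hr using
    mul_div_rpow_le_of_mul_le_mul_deriv ha hf hf' hr

section ElasticityBounds

variable {u v α β : ℝ → ℝ} {a c : ℝ}

lemma mul_le_mul_deriv_of_le_elasticity (ha : 0 < a) (hv : ∀ r ≥ a, 0 < v r)
    (hβ : ∀ r ≥ a, c ≤ β r) : ∀ r ≥ a, c * v r ≤ r * (v r * β r / r) := by
  intro r hr
  rw [mul_div_cancel₀ _ (ha.trans_le hr).ne', mul_comm]
  exact mul_le_mul_of_nonneg_left (hβ r hr) (hv r hr).le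

lemma tendsto_atTop_of_le_elasticity (ha : 0 < a) (hc : 0 < c) (hv : ∀ r ≥ a, 0 < v r)
    (hv' : ∀ r ≥ a, HasElasticityAt v (β r) r) (hβ : ∀ r ≥ a, c ≤ β r) :
    Tendsto v atTop atTop :=
  tendsto_atTop_of_mul_le_mul_deriv ha hc (hv a le_rfl) hv'
    (mul_le_mul_deriv_of_le_elasticity ha hv hβ)

lemma le_of_elasticity_nonneg (ha : 0 < a) (hv : ∀ r ≥ a, 0 < v r)
    (hv' : ∀ r ≥ a, HasElasticityAt v (β r) r) (hβ : ∀ r ≥ a, 0 ≤ β r) : ∀ r ≥ a, v a ≤ v r := by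
  intro r hr
  simpa only [Real.rpow_zero, mul_one] using mul_div_rpow_le_of_mul_le_mul_deriv ha hv'
    (mul_le_mul_deriv_of_le_elasticity ha hv hβ) hr

-- `κ - d / v` grows at least like `r ^ d` once it is positive, but it never exceeds `κ`.
lemma le_div_of_riccati {d κ : ℝ} (ha : 0 < a) (hd : 0 < d) (hκ : 0 < κ)
    (hv : ∀ r ≥ a, 0 < v r) (hv' : ∀ r ≥ a, HasElasticityAt v (β r) r)
    (hβ : ∀ r ≥ a, -d + κ * v r ≤ β r) : ∀ r ≥ a, v r ≤ d / κ := by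
  intro b hb
  by_contra! hlt
  have hderiv : ∀ r ≥ b, HasDerivAt (fun r => κ - d / v r) (d * β r / (v r * r)) r := by
    intro r hr
    have hr₀ : 0 < r := ha.trans_le (hb.trans hr)
    have hvr : 0 < v r := hv r (hb.trans hr)
    refine (((hasDerivAt_const r d).fun_div (hv' r (hb.trans hr)) hvr.ne').const_sub κ).congr_deriv
      ?_
    field_simp
    ring
  have hgrow : ∀ r ≥ b, d * (κ - d / v r) ≤ r * (d * β r / (v r * r)) := by
    intro r hr
    have hr₀ : 0 < r := ha.trans_le (hb.trans hr)
    have hvr : 0 < v r := hv r (hb.trans hr)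
    calc d * (κ - d / v r) = d * (-d + κ * v r) / v r := by field_simp; ring
      _ ≤ d * β r / v r := by gcongr; exact hβ r (hb.trans hr)
      _ = r * (d * β r / (v r * r)) := by field_simp
  have hpos : 0 < κ - d / v b := by
    rw [sub_pos, div_lt_iff₀ (hv b hb), ← div_lt_iff₀' hκ]
    exact hlt
  have htop := tendsto_atTop_of_mul_le_mul_deriv (ha.trans_le hb) hd hpos hderiv hgrow
  obtain ⟨r, hκr, hr⟩ := ((htop.eventually_ge_atTop κ).and (eventually_ge_atTop b)).exists
  linarith [div_pos hd (hv r (hb.trans hr))]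

-- `u v ^ N` is increasing, so `u` is bounded below, so `u v ^ N` grows like a power of `r`.
lemma tendsto_atTop_of_mul_le_elasticity_add {N B : ℝ} (ha : 0 < a) (hc : 0 < c) (hN : 0 ≤ N)
    (hu : ∀ r ≥ a, 0 < u r) (hv : ∀ r ≥ a, 0 < v r) (hvB : ∀ r ≥ a, v r ≤ B)
    (hu' : ∀ r ≥ a, HasElasticityAt u (α r) r) (hv' : ∀ r ≥ a, HasElasticityAt v (β r) r)
    (hsum : ∀ r ≥ a, c * u r ≤ α r + N * β r) : Tendsto u atTop atTop := by
  have hB : 0 < B := (hv a le_rfl).trans_le (hvB a le_rfl)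
  have hBN : 0 < B ^ N := Real.rpow_pos_of_pos hB N
  set Z : ℝ → ℝ := fun r => u r * v r ^ N
  have hZpos : ∀ r ≥ a, 0 < Z r := fun r hr =>
    mul_pos (hu r hr) (Real.rpow_pos_of_pos (hv r hr) N)
  have hZ' : ∀ r ≥ a, HasElasticityAt Z (α r + N * β r) r := fun r hr =>
    (hu' r hr).mul ((hv' r hr).rpow_const (hv r hr).ne' N)
  have hZu : ∀ r ≥ a, Z r / B ^ N ≤ u r := by
    intro r hr
    rw [div_le_iff₀ hBN]
    exact mul_le_mul_of_nonneg_left (Real.rpow_le_rpow (hv r hr).le (hvB r hr) hN) (hu r hr).le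
  have hZmono : ∀ r ≥ a, Z a ≤ Z r := le_of_elasticity_nonneg ha hZpos hZ' fun r hr =>
    (mul_pos hc (hu r hr)).le.trans (hsum r hr)
  have hrate : ∀ r ≥ a, c * (Z a / B ^ N) ≤ α r + N * β r := by
    intro r hr
    refine le_trans ?_ (hsum r hr)
    gcongr
    exact (div_le_div_of_nonneg_right (hZmono r hr) hBN.le).trans (hZu r hr)
  have hZtop : Tendsto Z atTop atTop :=
    tendsto_atTop_of_le_elasticity ha (mul_pos hc (div_pos (hZpos a le_rfl) hBN)) hZpos hZ' hrate
  refine tendsto_atTop_mono' _ ?_ (hZtop.atTop_div_const hBN)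
  filter_upwards [eventually_ge_atTop a] with r hr using hZu r hr

theorem false_of_elasticity_bounds {N d e K κ : ℝ} (ha : 0 < a) (hc : 0 < c) (hN : 0 ≤ N)
    (hd : 0 < d) (he : 0 < e) (hκ : 0 < κ)
    (hu : ∀ r ≥ a, 0 < u r) (hv : ∀ r ≥ a, 0 < v r)
    (hu' : ∀ r ≥ a, HasElasticityAt u (α r) r) (hv' : ∀ r ≥ a, HasElasticityAt v (β r) r)
    (hsum : ∀ r ≥ a, c * u r ≤ α r + N * β r)
    (hriccati : ∀ r ≥ a, -d + κ * v r ≤ β r)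
    (hlarge : ∀ r ≥ a, K ≤ u r → e ≤ β r) : False := by
  have hv_le : ∀ r ≥ a, v r ≤ d / κ := le_div_of_riccati ha hd hκ hv hv' hriccati
  have hu_top : Tendsto u atTop atTop :=
    tendsto_atTop_of_mul_le_elasticity_add ha hc hN hu hv hv_le hu' hv' hsum
  obtain ⟨b, hb⟩ := eventually_atTop.1 <|
    (hu_top.eventually_ge_atTop K).and (eventually_ge_atTop a)
  have hba : a ≤ b := (hb b le_rfl).2
  have hv_top : Tendsto v atTop atTop :=
    tendsto_atTop_of_le_elasticity (ha.trans_le hba) he (fun r hr => hv r (hba.trans hr))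
      (fun r hr => hv' r (hba.trans hr)) fun r hr => hlarge r (hba.trans hr) (hb r hr).1
  obtain ⟨r, hlt, hr⟩ := ((hv_top.eventually_gt_atTop (d / κ)).and (eventually_ge_atTop a)).exists
  exact (hv_le r hr).not_gt hlt

end ElasticityBounds

/-! ### Kinetic integrals -/

lemma integrableOn_Ioo_of_norm_le_rpow {f : ℝ → ℝ} {a b c C δ s : ℝ} (hs : -1 < s) (hδ : 0 < δ)
    (hac : a < c) (hf : ContinuousOn f (Ioo a b))
    (hbound : ∀ x ∈ Ioo (b - δ) b, ‖f x‖ ≤ C * (b - x) ^ s) : IntegrableOn f (Ioo c b) := by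
  have hleft : IntegrableOn f (Icc c (b - δ / 2)) :=
    (hf.mono fun x hx => ⟨hac.trans_le hx.1, by linarith [hx.2]⟩).integrableOn_Icc
  have hdom : IntegrableOn (fun x => C * (b - x) ^ s) (Ioo (b - δ) b) := by
    have hpow : IntervalIntegrable (fun x : ℝ => x ^ s) volume 0 δ :=
      intervalIntegral.intervalIntegrable_rpow' hs
    have hrefl := (hpow.comp_sub_left b).symm
    rw [sub_zero, intervalIntegrable_iff_integrableOn_Ioo_of_le (by linarith)] at hrefl
    exact hrefl.const_mul C
  have hright : IntegrableOn f (Ioo (max c (b - δ)) b) := by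
    have hsub : Ioo (max c (b - δ)) b ⊆ Ioo (b - δ) b := Ioo_subset_Ioo_left (le_max_right _ _)
    refine Integrable.mono' (hdom.mono_set hsub) ?_
      (ae_restrict_of_forall_mem measurableSet_Ioo fun x hx => hbound x (hsub hx))
    exact (hf.mono (Ioo_subset_Ioo_left (hac.le.trans (le_max_left _ _)))).aestronglyMeasurable
      measurableSet_Ioo
  refine (hleft.union hright).mono_set fun x hx => ?_
  rcases le_or_gt x (b - δ / 2) with hxδ | hxδ
  · exact Or.inl ⟨hx.1.le, hxδ⟩
  · exact Or.inr ⟨max_lt hx.1 (by linarith), hx.2⟩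

/-- The factor `(E² - e^{-2η})/2` whose powers are integrated in `g_i(η)`. -/
noncomputable def energyExcess (E η : ℝ) : ℝ :=
  (E ^ 2 - Real.exp (-2 * η)) / 2

/-- The derivative in `s` of `energyExcess E s ^ p`, extended by zero to the energies `E` below
the threshold `e^{-s}`. -/
noncomputable def excessKernel (p E s : ℝ) : ℝ :=
  (Ioi (Real.exp (-s))).indicator
    (fun E => p * Real.exp (-2 * s) * energyExcess E s ^ (p - 1)) E

section EnergyExcess

variable {E η p : ℝ}

lemma energyExcess_eq (E η : ℝ) : energyExcess E η = (E ^ 2 - Real.exp (-η) ^ 2) / 2 := by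
  rw [energyExcess, ← Real.exp_nat_mul]
  push_cast
  ring_nf

lemma energyExcess_pos (hE : Real.exp (-η) < E) : 0 < energyExcess E η := by
  rw [energyExcess_eq]
  exact half_pos (sub_pos.2 (pow_lt_pow_left₀ hE (Real.exp_pos _).le two_ne_zero))

lemma energyExcess_le_one (hE₀ : 0 ≤ E) (hE₁ : E ≤ 1) : energyExcess E η ≤ 1 := by
  rw [energyExcess]
  linarith [pow_le_one₀ hE₀ hE₁ (n := 2), Real.exp_pos (-2 * η)]

lemma energyExcess_neg_log (hE : 0 < E) : energyExcess E (-Real.log E) = 0 := by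
  rw [energyExcess_eq, neg_neg, Real.exp_log hE, sub_self, zero_div]

lemma hasDerivAt_energyExcess_rpow (hE : Real.exp (-η) < E) :
    HasDerivAt (fun s => energyExcess E s ^ p)
      (p * Real.exp (-2 * η) * energyExcess E η ^ (p - 1)) η := by
  have hexcess : HasDerivAt (energyExcess E) (Real.exp (-2 * η)) η :=
    ((((hasDerivAt_id' η).const_mul (-2)).exp.const_sub (E ^ 2)).div_const 2).congr_deriv (by ring)
  exact (hexcess.rpow_const (Or.inl (energyExcess_pos hE).ne')).congr_deriv (by ring)

lemma measurable_energyExcess : Measurable fun z : ℝ × ℝ => energyExcess z.1 z.2 := by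
  unfold energyExcess; fun_prop

lemma measurable_excessKernel : Measurable fun z : ℝ × ℝ => excessKernel p z.1 z.2 := by
  have hsupp : MeasurableSet {z : ℝ × ℝ | Real.exp (-z.2) < z.1} :=
    measurableSet_lt (by fun_prop) measurable_fst
  exact Measurable.indicator
    ((by fun_prop : Measurable fun z : ℝ × ℝ => p * Real.exp (-2 * z.2)).mul
      (measurable_energyExcess.pow_const (p - 1))) hsupp

lemma excessKernel_nonneg (hp : 0 ≤ p) (E s : ℝ) : 0 ≤ excessKernel p E s :=
  indicator_apply_nonneg fun hE => mul_nonneg (mul_nonneg hp (Real.exp_pos _).le)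
    (Real.rpow_nonneg (energyExcess_pos hE).le _)

lemma exp_neg_lt_iff_neg_log_lt (hE : 0 < E) : Real.exp (-η) < E ↔ -Real.log E < η := by
  rw [← Real.lt_log_iff_exp_lt hE, neg_lt]

lemma excessKernel_eq_indicator (hE : 0 < E) :
    excessKernel p E = (Ioi (-Real.log E)).indicator
      fun s => p * Real.exp (-2 * s) * energyExcess E s ^ (p - 1) := by
  ext s
  simp only [excessKernel, indicator, mem_Ioi, exp_neg_lt_iff_neg_log_lt hE]

lemma continuous_energyExcess_rpow (hp : 0 ≤ p) : Continuous fun s => energyExcess E s ^ p := by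
  unfold energyExcess
  exact Continuous.rpow_const (by fun_prop) fun _ => Or.inr hp

lemma hasDerivAt_energyExcess_rpow_of_mem (hE : 0 < E) :
    ∀ s ∈ Ioo (-Real.log E) η, HasDerivAt (fun s => energyExcess E s ^ p)
      (p * Real.exp (-2 * s) * energyExcess E s ^ (p - 1)) s := fun _ hs =>
  hasDerivAt_energyExcess_rpow ((exp_neg_lt_iff_neg_log_lt hE).2 hs.1)

lemma integrableOn_deriv_energyExcess_rpow (hp : 0 ≤ p) (hE : 0 < E) :
    IntegrableOn (fun s => p * Real.exp (-2 * s) * energyExcess E s ^ (p - 1))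
      (Ioc (-Real.log E) η) := by
  refine intervalIntegral.integrableOn_deriv_of_nonneg
    (continuous_energyExcess_rpow hp).continuousOn (hasDerivAt_energyExcess_rpow_of_mem hE)
    fun s hs => ?_
  have := energyExcess_pos ((exp_neg_lt_iff_neg_log_lt hE).2 hs.1)
  positivity

lemma Ioc_zero_inter_Ioi_neg_log (hE₀ : 0 < E) (hE₁ : E ≤ 1) :
    Ioc 0 η ∩ Ioi (-Real.log E) = Ioc (-Real.log E) η := by
  rw [Ioc_inter_Ioi, max_eq_right (neg_nonneg.2 (Real.log_nonpos hE₀.le hE₁))]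

lemma integrableOn_excessKernel (hp : 0 ≤ p) (hE₀ : 0 < E) (hE₁ : E ≤ 1) :
    IntegrableOn (excessKernel p E) (Ioc 0 η) := by
  rw [excessKernel_eq_indicator hE₀, integrableOn_indicator_iff measurableSet_Ioi, inter_comm,
    Ioc_zero_inter_Ioi_neg_log hE₀ hE₁]
  exact integrableOn_deriv_energyExcess_rpow hp hE₀

lemma integral_excessKernel (hp : 0 < p) (hηE : Real.exp (-η) ≤ E) (hE₁ : E ≤ 1) :
    ∫ s in Ioc 0 η, excessKernel p E s = energyExcess E η ^ p := by
  have hE₀ : 0 < E := (Real.exp_pos _).trans_le hηE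
  have hle : -Real.log E ≤ η := by rwa [neg_le, Real.le_log_iff_exp_le hE₀]
  rw [excessKernel_eq_indicator hE₀, setIntegral_indicator measurableSet_Ioi,
    Ioc_zero_inter_Ioi_neg_log hE₀ hE₁, ← intervalIntegral.integral_of_le hle,
    intervalIntegral.integral_eq_sub_of_hasDerivAt_of_le hle
      (continuous_energyExcess_rpow hp.le).continuousOn (hasDerivAt_energyExcess_rpow_of_mem hE₀)
      ((intervalIntegrable_iff_integrableOn_Ioc_of_le hle).2
        (integrableOn_deriv_energyExcess_rpow hp.le hE₀)),
    energyExcess_neg_log hE₀, Real.zero_rpow hp.ne', sub_zero]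

end EnergyExcess

section KineticIntegrals

variable {φ : ℝ → ℝ} {p η : ℝ}

lemma gfun_eq_setIntegral (hη : 0 ≤ η) (φ : ℝ → ℝ) (i : ℝ) :
    gfun φ i η = ∫ E in Ioo (Real.exp (-η)) 1, φ E * energyExcess E η ^ i := by
  rw [gfun, intervalIntegral.integral_of_le (Real.exp_le_one_iff.2 (neg_nonpos.2 hη)),
    integral_Ioc_eq_integral_Ioo]
  rfl

lemma gfun_nonneg (hφ₀ : ∀ x ∈ Ioo (0 : ℝ) 1, 0 ≤ φ x) (hη : 0 ≤ η) (i : ℝ) :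
    0 ≤ gfun φ i η := by
  rw [gfun_eq_setIntegral hη]
  exact setIntegral_nonneg measurableSet_Ioo fun x hx =>
    mul_nonneg (hφ₀ x ⟨(Real.exp_pos _).trans hx.1, hx.2⟩)
      (Real.rpow_nonneg (energyExcess_pos hx.1).le i)

lemma integrableOn_mul_energyExcess_rpow (hφ : IntegrableOn φ (Ioo (Real.exp (-η)) 1))
    (hp : 0 ≤ p) : IntegrableOn (fun E => φ E * energyExcess E η ^ p)
      (Ioo (Real.exp (-η)) 1) := by
  refine Integrable.mul_bdd (c := 1) hφ ?_ ?_
  · unfold energyExcess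
    exact Measurable.aestronglyMeasurable (by fun_prop)
  · refine ae_restrict_of_forall_mem measurableSet_Ioo fun E hE => ?_
    have hpos := energyExcess_pos hE.1
    rw [Real.norm_of_nonneg (Real.rpow_nonneg hpos.le p)]
    exact Real.rpow_le_one hpos.le
      (energyExcess_le_one ((Real.exp_pos _).trans hE.1).le hE.2.le) hp

lemma integrable_mul_excessKernel (hφ : IntegrableOn φ (Ioo (Real.exp (-η)) 1)) (hp : 0 < p) :
    Integrable (fun z : ℝ × ℝ => φ z.1 * excessKernel p z.1 z.2)
      ((volume.restrict (Ioo (Real.exp (-η)) 1)).prod (volume.restrict (Ioc 0 η))) := by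
  have hmeas : AEStronglyMeasurable (fun z : ℝ × ℝ => φ z.1 * excessKernel p z.1 z.2)
      ((volume.restrict (Ioo (Real.exp (-η)) 1)).prod (volume.restrict (Ioc 0 η))) :=
    hφ.aestronglyMeasurable.comp_fst.mul measurable_excessKernel.aestronglyMeasurable
  refine (integrable_prod_iff hmeas).2 ⟨?_, ?_⟩
  · exact ae_restrict_of_forall_mem measurableSet_Ioo fun E hE =>
      (integrableOn_excessKernel hp.le ((Real.exp_pos _).trans hE.1) hE.2.le).const_mul (φ E)
  · refine (integrableOn_mul_energyExcess_rpow hφ hp.le).norm.congr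
      (ae_restrict_of_forall_mem measurableSet_Ioo fun E hE => ?_)
    simp only [norm_mul, Real.norm_of_nonneg (excessKernel_nonneg hp.le _ _)]
    rw [integral_const_mul, integral_excessKernel hp hE.1.le hE.2.le,
      Real.norm_of_nonneg (Real.rpow_nonneg (energyExcess_pos hE.1).le p)]

lemma integral_mul_excessKernel_eq_gfun {s : ℝ} (hs : s ∈ Ioc 0 η) :
    ∫ E in Ioo (Real.exp (-η)) 1, φ E * excessKernel p E s =
      p * Real.exp (-2 * s) * gfun φ (p - 1) s := by
  have hkernel : (fun E => φ E * excessKernel p E s) = (Ioi (Real.exp (-s))).indicator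
      fun E => p * Real.exp (-2 * s) * (φ E * energyExcess E s ^ (p - 1)) := by
    ext E
    simp only [excessKernel, indicator]
    split_ifs <;> ring
  have hinter : Ioo (Real.exp (-η)) 1 ∩ Ioi (Real.exp (-s)) = Ioo (Real.exp (-s)) 1 := by
    rw [Ioo_inter_Ioi, max_eq_right (Real.exp_le_exp.2 (neg_le_neg hs.2))]
  rw [gfun_eq_setIntegral hs.1.le, ← integral_const_mul, hkernel,
    setIntegral_indicator measurableSet_Ioi, hinter]

lemma integrableOn_gfun_sub_one (hφ : IntegrableOn φ (Ioo (Real.exp (-η)) 1)) (hp : 0 < p) :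
    IntegrableOn (fun s => p * Real.exp (-2 * s) * gfun φ (p - 1) s) (Ioc 0 η) :=
  (integrable_mul_excessKernel hφ hp).integral_prod_right.congr
    (ae_restrict_of_forall_mem measurableSet_Ioc fun _ hs => integral_mul_excessKernel_eq_gfun hs)

-- Differentiating under the integral sign fails for `p < 1`, where the integrand of
-- `gfun φ (p - 1)` is singular at the threshold; Fubini replaces it.
lemma gfun_eq_setIntegral_gfun_sub_one (hφ : IntegrableOn φ (Ioo (Real.exp (-η)) 1))
    (hp : 0 < p) (hη : 0 ≤ η) :
    gfun φ p η = ∫ s in Ioc 0 η, p * Real.exp (-2 * s) * gfun φ (p - 1) s := by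
  calc gfun φ p η
      = ∫ E in Ioo (Real.exp (-η)) 1, ∫ s in Ioc 0 η, φ E * excessKernel p E s := by
        rw [gfun_eq_setIntegral hη]
        refine setIntegral_congr_fun measurableSet_Ioo fun E hE => ?_
        simp only [integral_const_mul, integral_excessKernel hp hE.1.le hE.2.le]
    _ = ∫ s in Ioc 0 η, ∫ E in Ioo (Real.exp (-η)) 1, φ E * excessKernel p E s :=
        integral_integral_swap (integrable_mul_excessKernel hφ hp)
    _ = ∫ s in Ioc 0 η, p * Real.exp (-2 * s) * gfun φ (p - 1) s :=
        setIntegral_congr_fun measurableSet_Ioc fun _ hs => integral_mul_excessKernel_eq_gfun hs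

lemma monotoneOn_gfun (hφ : ∀ c > 0, IntegrableOn φ (Ioo c 1)) (hφ₀ : ∀ x ∈ Ioo (0 : ℝ) 1, 0 ≤ φ x)
    (hp : 0 < p) : MonotoneOn (gfun φ p) (Ici 0) := by
  intro η (hη : 0 ≤ η) η' (hη' : 0 ≤ η') hle
  rw [gfun_eq_setIntegral_gfun_sub_one (hφ _ (Real.exp_pos _)) hp hη,
    gfun_eq_setIntegral_gfun_sub_one (hφ _ (Real.exp_pos _)) hp hη']
  refine setIntegral_mono_set (integrableOn_gfun_sub_one (hφ _ (Real.exp_pos _)) hp) ?_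
    (Ioc_subset_Ioc_right hle).eventuallyLE
  exact ae_restrict_of_forall_mem measurableSet_Ioc fun s hs =>
    mul_nonneg (mul_nonneg hp.le (Real.exp_pos _).le) (gfun_nonneg hφ₀ hs.1.le _)

lemma intervalIntegrable_gfun_sub_one (hφ : ∀ c > 0, IntegrableOn φ (Ioo c 1)) (hp : 0 < p)
    (hη : 0 ≤ η) : IntervalIntegrable (fun s => p * Real.exp (-2 * s) * gfun φ (p - 1) s)
      volume 0 η :=
  (intervalIntegrable_iff_integrableOn_Ioc_of_le hη).2
    (integrableOn_gfun_sub_one (hφ _ (Real.exp_pos _)) hp)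

lemma gfun_eventuallyEq_integral (hφ : ∀ c > 0, IntegrableOn φ (Ioo c 1)) (hp : 0 < p)
    (hη : 0 < η) : gfun φ p =ᶠ[nhds η]
      fun x => ∫ s in 0..x, p * Real.exp (-2 * s) * gfun φ (p - 1) s := by
  filter_upwards [lt_mem_nhds hη] with x hx
  rw [intervalIntegral.integral_of_le hx.le,
    gfun_eq_setIntegral_gfun_sub_one (hφ _ (Real.exp_pos _)) hp hx.le]

lemma continuousAt_gfun (hφ : ∀ c > 0, IntegrableOn φ (Ioo c 1)) (hp : 0 < p) (hη : 0 < η) :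
    ContinuousAt (gfun φ p) η := by
  have hcont := intervalIntegral.continuousOn_primitive_interval'
    (intervalIntegrable_gfun_sub_one hφ hp (by linarith : (0 : ℝ) ≤ η + 1)) left_mem_uIcc
  rw [uIcc_of_le (by linarith)] at hcont
  exact (hcont.continuousAt (Icc_mem_nhds hη (lt_add_one η))).congr
    (gfun_eventuallyEq_integral hφ hp hη).symm

lemma hasDerivAt_gfun (hφ : ∀ c > 0, IntegrableOn φ (Ioo c 1)) (hp : 0 < p) (hη : 0 < η)
    (hcont : ContinuousAt (gfun φ (p - 1)) η) :
    HasDerivAt (gfun φ p) (p * Real.exp (-2 * η) * gfun φ (p - 1) η) η := by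
  have hmeas : StronglyMeasurableAtFilter (fun s => p * Real.exp (-2 * s) * gfun φ (p - 1) s)
      (nhds η) :=
    ⟨Ioc 0 (η + 1), Ioc_mem_nhds hη (lt_add_one η),
      (integrableOn_gfun_sub_one (hφ _ (Real.exp_pos _)) hp).aestronglyMeasurable⟩
  refine HasDerivAt.congr_of_eventuallyEq ?_ (gfun_eventuallyEq_integral hφ hp hη)
  exact intervalIntegral.integral_hasDerivAt_right (intervalIntegrable_gfun_sub_one hφ hp hη.le)
    hmeas (ContinuousAt.mul (by fun_prop) hcont)

end KineticIntegrals

/-! ### Pressure, density and their quotient -/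

section Matter

variable {φ : ℝ → ℝ} {l η r : ℝ}

lemma acoef_pos (hl : -1 < l) : 0 < acoef l := by
  have hΓ₁ := Real.Gamma_pos_of_pos (show 0 < l + 1 by linarith)
  have hl₀ : 0 < l + 3 / 2 := by linarith
  unfold acoef
  positivity

lemma pRad_nonneg (hl : -1 < l) (hφ₀ : ∀ x ∈ Ioo (0 : ℝ) 1, 0 ≤ φ x) (hη : 0 ≤ η)
    (hr : 0 ≤ r) : 0 ≤ pRad φ l r η := by
  have hG := gfun_nonneg hφ₀ hη (l + 3 / 2)
  have ha := acoef_pos hl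
  unfold pRad
  positivity

lemma pRad_pos (hl : -1 < l) (hr : 0 < r) (hG : 0 < gfun φ (l + 3 / 2) η) :
    0 < pRad φ l r η := by
  have ha := acoef_pos hl
  unfold pRad
  positivity

lemma mul_pRad_le_rhoFun (hl : -1 < l) (hφ₀ : ∀ x ∈ Ioo (0 : ℝ) 1, 0 ≤ φ x) (hη : 0 ≤ η)
    (hr : 0 ≤ r) : (3 + 2 * l) * pRad φ l r η ≤ rhoFun φ l r η := by
  have hG := gfun_nonneg hφ₀ hη (l + 1 / 2)
  have ha := acoef_pos hl
  have hl₀ : 0 < l + 3 / 2 := by linarith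
  have hdecomp : rhoFun φ l r η = (3 + 2 * l) * pRad φ l r η +
      (l + 3 / 2) * acoef l * r ^ (2 * l) * Real.exp ((2 * l + 4) * η) *
        (Real.exp (-2 * η) * gfun φ (l + 1 / 2) η) := by
    unfold rhoFun pRad; ring
  rw [hdecomp]
  exact le_add_of_nonneg_right (by positivity)

lemma pRad_eq_rpow_mul (φ : ℝ → ℝ) (l r η : ℝ) :
    pRad φ l r η = r ^ (2 * l) * pRad φ l 1 η := by
  unfold pRad
  rw [Real.one_rpow]
  ring

lemma monotoneOn_pRad (hl : -1 < l) (hφ : ∀ c > 0, IntegrableOn φ (Ioo c 1))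
    (hφ₀ : ∀ x ∈ Ioo (0 : ℝ) 1, 0 ≤ φ x) (hr : 0 ≤ r) : MonotoneOn (pRad φ l r) (Ici 0) := by
  intro η (hη : 0 ≤ η) η' (hη' : 0 ≤ η') hle
  have hG : gfun φ (l + 3 / 2) η ≤ gfun φ (l + 3 / 2) η' :=
    monotoneOn_gfun hφ hφ₀ (by linarith) hη hη' hle
  have hG₀ := gfun_nonneg hφ₀ hη (l + 3 / 2)
  have ha := acoef_pos hl
  have hl₀ : 0 ≤ 2 * l + 4 := by linarith
  unfold pRad
  gcongr

lemma mul_rpow_mul_pRad_le_rhoFun {η₀ : ℝ} (hl : -1 < l) (hφ : ∀ c > 0, IntegrableOn φ (Ioo c 1))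
    (hφ₀ : ∀ x ∈ Ioo (0 : ℝ) 1, 0 ≤ φ x) (hη₀ : 0 ≤ η₀) (hη : η₀ ≤ η) (hr : 0 ≤ r) :
    (3 + 2 * l) * (r ^ (2 * l) * pRad φ l 1 η₀) ≤ rhoFun φ l r η := by
  have hl₀ : 0 ≤ 3 + 2 * l := by linarith
  rw [← pRad_eq_rpow_mul]
  calc (3 + 2 * l) * pRad φ l r η₀ ≤ (3 + 2 * l) * pRad φ l r η :=
        mul_le_mul_of_nonneg_left (monotoneOn_pRad hl hφ hφ₀ hr hη₀ (hη₀.trans hη) hη) hl₀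
    _ ≤ rhoFun φ l r η := mul_pRad_le_rhoFun hl hφ₀ (hη₀.trans hη) hr

lemma sigmaFun_nonneg (hl : -1 < l) (hφ₀ : ∀ x ∈ Ioo (0 : ℝ) 1, 0 ≤ φ x) (hη : 0 ≤ η) :
    0 ≤ sigmaFun φ l η := by
  have hG₁ := gfun_nonneg hφ₀ hη (l + 3 / 2)
  have hG₂ := gfun_nonneg hφ₀ hη (l + 1 / 2)
  have hl₀ : 0 < 3 + 2 * l := by linarith
  unfold sigmaFun
  positivity

lemma sigmaFun_le (hl : -1 < l) (hφ₀ : ∀ x ∈ Ioo (0 : ℝ) 1, 0 ≤ φ x) (hη : 0 ≤ η) :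
    sigmaFun φ l η ≤ 1 / (3 + 2 * l) := by
  have hG₁ := gfun_nonneg hφ₀ hη (l + 3 / 2)
  have hG₂ := gfun_nonneg hφ₀ hη (l + 1 / 2)
  have hl₀ : 0 < 3 + 2 * l := by linarith
  rw [sigmaFun, mul_div_assoc]
  exact mul_le_of_le_one_right (by positivity)
    (div_le_one_of_le₀ (le_add_of_nonneg_right (by positivity)) (by positivity))

lemma gfun_pos_of_sigmaFun_ne_zero (hφ₀ : ∀ x ∈ Ioo (0 : ℝ) 1, 0 ≤ φ x) (hη : 0 ≤ η)
    (hσ : sigmaFun φ l η ≠ 0) : 0 < gfun φ (l + 3 / 2) η :=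
  (gfun_nonneg hφ₀ hη _).lt_of_ne fun h => hσ (by rw [sigmaFun, ← h, mul_zero, zero_div])

lemma sigmaFun_mul_rhoFun (hl : -1 < l) (hσ : sigmaFun φ l η ≠ 0) (r : ℝ) :
    sigmaFun φ l η * rhoFun φ l r η = pRad φ l r η := by
  have hden : gfun φ (l + 3 / 2) η + 1 / 2 * Real.exp (-2 * η) * gfun φ (l + 1 / 2) η ≠ 0 :=
    fun h => hσ (by rw [sigmaFun, h, div_zero])
  have hl₀ : 3 + 2 * l ≠ 0 := by linarith
  have hrho : rhoFun φ l r η = (3 + 2 * l) *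
      (acoef l * r ^ (2 * l) * Real.exp ((2 * l + 4) * η) *
        (gfun φ (l + 3 / 2) η + 1 / 2 * Real.exp (-2 * η) * gfun φ (l + 1 / 2) η)) := by
    unfold rhoFun; ring
  rw [hrho, sigmaFun, pRad]
  generalize gfun φ (l + 3 / 2) η + 1 / 2 * Real.exp (-2 * η) * gfun φ (l + 1 / 2) η = D at hden ⊢
  field_simp

lemma mul_gfun_eq_gfun_mul_inv_sigmaFun_sub (hσ : sigmaFun φ l η ≠ 0) :
    (l + 3 / 2) * Real.exp (-2 * η) * gfun φ (l + 1 / 2) η =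
      gfun φ (l + 3 / 2) η * (1 / sigmaFun φ l η - (3 + 2 * l)) := by
  have hG : gfun φ (l + 3 / 2) η ≠ 0 := fun h => hσ (by rw [sigmaFun, h, mul_zero, zero_div])
  have hinv : 1 / sigmaFun φ l η = (3 + 2 * l) *
      (gfun φ (l + 3 / 2) η + 1 / 2 * Real.exp (-2 * η) * gfun φ (l + 1 / 2) η) /
        gfun φ (l + 3 / 2) η := by
    rw [sigmaFun, one_div_div, ← div_div, div_div_eq_mul_div, div_one, mul_comm]
  rw [hinv, mul_sub, mul_div_cancel₀ _ hG]
  ring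

-- `σ ≥ 0`, so a zero of `σ` would be a local minimum.
lemma sigmaFun_pos_of_deriv_ne_zero (hl : -1 < l) (hφ₀ : ∀ x ∈ Ioo (0 : ℝ) 1, 0 ≤ φ x)
    (hη : 0 < η) (hσ' : deriv (sigmaFun φ l) η ≠ 0) : 0 < sigmaFun φ l η := by
  refine (sigmaFun_nonneg hl hφ₀ hη.le).lt_of_ne fun hzero => hσ' (IsLocalMin.deriv_eq_zero ?_)
  filter_upwards [lt_mem_nhds hη] with x hx
  rw [← hzero]
  exact sigmaFun_nonneg hl hφ₀ hx.le

-- `g_{l+1/2}` inherits continuity from `σ` and `g_{l+3/2}`, which determine it algebraically.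
lemma continuousAt_gfun_of_continuousAt_sigmaFun (hl : -1 < l)
    (hφ : ∀ c > 0, IntegrableOn φ (Ioo c 1)) (hη : 0 < η) (hσ : sigmaFun φ l η ≠ 0)
    (hcont : ContinuousAt (sigmaFun φ l) η) : ContinuousAt (gfun φ (l + 1 / 2)) η := by
  have hl₀ : l + 3 / 2 ≠ 0 := by linarith
  have hquot : ContinuousAt (fun x => gfun φ (l + 3 / 2) x * (1 / sigmaFun φ l x - (3 + 2 * l)) /
      ((l + 3 / 2) * Real.exp (-2 * x))) η :=
    ((continuousAt_gfun hφ (by linarith) hη).mul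
      ((continuousAt_const.div hcont hσ).sub continuousAt_const)).div (by fun_prop) (by positivity)
  refine hquot.congr ?_
  filter_upwards [hcont.eventually_ne hσ] with x hx
  rw [← mul_gfun_eq_gfun_mul_inv_sigmaFun_sub hx,
    mul_div_cancel_left₀ _ (mul_ne_zero hl₀ (Real.exp_ne_zero _))]

lemma hasDerivAt_gfun_of_continuousAt_sigmaFun (hl : -1 < l)
    (hφ : ∀ c > 0, IntegrableOn φ (Ioo c 1)) (hη : 0 < η) (hσ : sigmaFun φ l η ≠ 0)
    (hcont : ContinuousAt (sigmaFun φ l) η) :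
    HasDerivAt (gfun φ (l + 3 / 2))
      (gfun φ (l + 3 / 2) η * (1 / sigmaFun φ l η - (3 + 2 * l))) η := by
  have hsub : l + 3 / 2 - 1 = l + 1 / 2 := by ring
  have hcont' := continuousAt_gfun_of_continuousAt_sigmaFun hl hφ hη hσ hcont
  have hderiv := hasDerivAt_gfun hφ (by linarith : 0 < l + 3 / 2) hη (by rwa [hsub])
  rwa [hsub, mul_gfun_eq_gfun_mul_inv_sigmaFun_sub hσ] at hderiv

end Matter

/-! ### Homology variables -/

/-- The homology variable `u = 4πr³ρ/m` (Milne's `U`) of a pair `(m, η)`. -/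
noncomputable def homologyU (φ : ℝ → ℝ) (l : ℝ) (m ηf : ℝ → ℝ) (r : ℝ) : ℝ :=
  4 * Real.pi * r ^ 3 * rhoFun φ l r (ηf r) / m r

/-- The homology variable `v = m/((r - 2m)σ)` of a pair `(m, η)`, a relativistic analogue of
Milne's `V`. -/
noncomputable def homologyV (φ : ℝ → ℝ) (l : ℝ) (m ηf : ℝ → ℝ) (r : ℝ) : ℝ :=
  m r / ((r - 2 * m r) * sigmaFun φ l (ηf r))

/-- The elasticity of the homology variable `u` along a solution, where `N = 3 + 2l` and `s`, `s'`
stand for `σ(η)`, `σ'(η)`. -/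
noncomputable def homologyURate (N s s' u v : ℝ) : ℝ :=
  N - u - (1 + s - s') * v * (1 + s * u)

/-- The elasticity of the homology variable `v` along a solution, where `s`, `s'` stand for `σ(η)`,
`σ'(η)`. -/
noncomputable def homologyVRate (s s' u v : ℝ) : ℝ :=
  (u - 1) * (1 + 2 * (s * v)) + s' * v * (1 + s * u)

section HomologyRates

variable {N s s' u v : ℝ}

lemma sub_one_mul_le_homologyURate_add (hN : 0 ≤ N) (hs : 0 ≤ s) (hu : 0 ≤ u) (hv : 0 ≤ v)
    (hsteep : 1 + (2 * N + 1) * s ≤ (N + 1) * s') :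
    (N - 1) * u ≤ homologyURate N s s' u v + N * homologyVRate s s' u v := by
  have hdecomp : homologyURate N s s' u v + N * homologyVRate s s' u v =
      (N - 1) * u + 2 * N * (s * v * u) * (1 + s)
        + v * (1 + s * u) * ((N + 1) * s' - (1 + (2 * N + 1) * s)) := by
    unfold homologyURate homologyVRate; ring
  rw [hdecomp, add_assoc]
  exact le_add_of_nonneg_right (by positivity)

lemma neg_one_add_mul_le_homologyVRate (hN : 0 < N) (hs : 0 ≤ s) (hsN : s ≤ 1 / N) (hu : 0 ≤ u)
    (hv : 0 ≤ v) (hsteep : 1 + (2 * N + 1) * s ≤ (N + 1) * s') :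
    -1 + (1 - 1 / N) / (N + 1) * v ≤ homologyVRate s s' u v := by
  have hs' : 0 ≤ s' :=
    nonneg_of_mul_nonneg_right (le_trans (by positivity) hsteep) (by linarith)
  have hκ : (1 - 1 / N) / (N + 1) ≤ s' - 2 * s := by
    rw [div_le_iff₀ (by linarith)]
    linarith
  calc -1 + (1 - 1 / N) / (N + 1) * v ≤ -1 + (s' - 2 * s) * v := by gcongr
    _ ≤ -1 + (s' - 2 * s) * v + (u * (1 + 2 * (s * v)) + s' * v * (s * u)) :=
        le_add_of_nonneg_right (by positivity)
    _ = homologyVRate s s' u v := by unfold homologyVRate; ring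

lemma one_le_homologyVRate (hs : 0 ≤ s) (hs' : 0 ≤ s') (hu : 2 ≤ u) (hv : 0 ≤ v) :
    1 ≤ homologyVRate s s' u v := by
  have hdecomp : homologyVRate s s' u v =
      1 + (u - 2 + (u - 2 + 1) * (2 * (s * v)) + s' * v * (1 + s * (u - 2 + 2))) := by
    unfold homologyVRate; ring
  rw [hdecomp]
  exact le_add_of_nonneg_right (by positivity)

end HomologyRates

namespace IsEVSolution

variable {φ m ηf : ℝ → ℝ} {l r₁ r : ℝ} {R : EReal}

lemma eta_pos (h : IsEVSolution φ l m ηf r₁ R) (hr₁ : r₁ < r) (hR : r < R) : 0 < ηf r :=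
  (h r hr₁ hR).1

lemma mass_pos (h : IsEVSolution φ l m ηf r₁ R) (hr₁ : r₁ < r) (hR : r < R) : 0 < m r :=
  (h r hr₁ hR).2.1

lemma two_mul_mass_lt (h : IsEVSolution φ l m ηf r₁ R) (hr₁ : r₁ < r) (hR : r < R) :
    2 * m r < r :=
  (h r hr₁ hR).2.2.1

lemma hasDerivAt_mass (h : IsEVSolution φ l m ηf r₁ R) (hr₁ : r₁ < r) (hR : r < R) :
    HasDerivAt m (4 * Real.pi * r ^ 2 * rhoFun φ l r (ηf r)) r :=
  (h r hr₁ hR).2.2.2.1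

lemma radius_pos (h : IsEVSolution φ l m ηf r₁ R) (hr₁ : r₁ < r) (hR : r < R) : 0 < r := by
  linarith [h.mass_pos hr₁ hR, h.two_mul_mass_lt hr₁ hR]

lemma homologyU_pos (hl : -1 < l) (hφ₀ : ∀ x ∈ Ioo (0 : ℝ) 1, 0 ≤ φ x)
    (h : IsEVSolution φ l m ηf r₁ R) (hr₁ : r₁ < r) (hR : r < R)
    (hσ : 0 < sigmaFun φ l (ηf r)) : 0 < homologyU φ l m ηf r := by
  have hr := h.radius_pos hr₁ hR
  have hm := h.mass_pos hr₁ hR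
  have hp : 0 < pRad φ l r (ηf r) :=
    pRad_pos hl hr (gfun_pos_of_sigmaFun_ne_zero hφ₀ (h.eta_pos hr₁ hR).le hσ.ne')
  have hρ : 0 < rhoFun φ l r (ηf r) :=
    pos_of_mul_pos_right ((sigmaFun_mul_rhoFun hl hσ.ne' r).symm ▸ hp) hσ.le
  unfold homologyU
  positivity

lemma homologyV_pos (h : IsEVSolution φ l m ηf r₁ R) (hr₁ : r₁ < r) (hR : r < R)
    (hσ : 0 < sigmaFun φ l (ηf r)) : 0 < homologyV φ l m ηf r :=
  div_pos (h.mass_pos hr₁ hR) (mul_pos (sub_pos.2 (h.two_mul_mass_lt hr₁ hR)) hσ)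

lemma hasDerivAt_eta (h : IsEVSolution φ l m ηf r₁ R) (hr₁ : r₁ < r) (hR : r < R) :
    HasDerivAt ηf (-((m r + 4 * Real.pi * r ^ 3 * pRad φ l r (ηf r)) / (r - 2 * m r)) / r) r := by
  have hr := h.radius_pos hr₁ hR
  have hgap : r - 2 * m r ≠ 0 := (sub_pos.2 (h.two_mul_mass_lt hr₁ hR)).ne'
  refine (h r hr₁ hR).2.2.2.2.congr_deriv ?_
  rw [show 1 - 2 * m r / r = (r - 2 * m r) / r by field_simp]
  field_simp

lemma hasElasticityAt_mass (h : IsEVSolution φ l m ηf r₁ R) (hr₁ : r₁ < r) (hR : r < R) :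
    HasElasticityAt m (homologyU φ l m ηf r) r := by
  have hr := h.radius_pos hr₁ hR
  have hm := h.mass_pos hr₁ hR
  refine (h.hasDerivAt_mass hr₁ hR).congr_deriv ?_
  unfold homologyU
  field_simp

lemma antitoneOn_eta (hl : -1 < l) (hφ₀ : ∀ x ∈ Ioo (0 : ℝ) 1, 0 ≤ φ x)
    (h : IsEVSolution φ l m ηf r₁ R) : AntitoneOn ηf {r | r₁ < r ∧ r < R} := by
  have hconn : OrdConnected {r : ℝ | r₁ < r ∧ r < R} :=
    ⟨fun x hx y hy z hz =>
      ⟨hx.1.trans_le hz.1, (EReal.coe_le_coe_iff.2 hz.2).trans_lt hy.2⟩⟩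
  refine antitoneOn_of_hasDerivWithinAt_nonpos hconn.convex
    (fun r hr => (h.hasDerivAt_eta hr.1 hr.2).continuousAt.continuousWithinAt)
    (fun r hr => (h.hasDerivAt_eta (interior_subset hr).1
      (interior_subset hr).2).hasDerivWithinAt) fun r hr => ?_
  obtain ⟨hr₁, hR⟩ := interior_subset hr
  have hr₀ := h.radius_pos hr₁ hR
  have hm := h.mass_pos hr₁ hR
  have hgap := sub_pos.2 (h.two_mul_mass_lt hr₁ hR)
  have hp := pRad_nonneg hl hφ₀ (h.eta_pos hr₁ hR).le hr₀.le
  exact div_nonpos_of_nonpos_of_nonneg (neg_nonpos.2 (by positivity)) hr₀.le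

lemma hasDerivAt_eta_of_sigmaFun_ne_zero (hl : -1 < l) (h : IsEVSolution φ l m ηf r₁ R)
    (hr₁ : r₁ < r) (hR : r < R) (hσ : sigmaFun φ l (ηf r) ≠ 0) :
    HasDerivAt ηf (-(sigmaFun φ l (ηf r) * homologyV φ l m ηf r *
      (1 + sigmaFun φ l (ηf r) * homologyU φ l m ηf r)) / r) r := by
  have hm := h.mass_pos hr₁ hR
  refine (h.hasDerivAt_eta hr₁ hR).congr_deriv ?_
  unfold homologyU homologyV
  rw [← sigmaFun_mul_rhoFun hl hσ]
  field_simp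

lemma hasElasticityAt_sigma (hl : -1 < l) (h : IsEVSolution φ l m ηf r₁ R) (hr₁ : r₁ < r)
    (hR : r < R) (hσ : sigmaFun φ l (ηf r) ≠ 0)
    (hσd : DifferentiableAt ℝ (sigmaFun φ l) (ηf r)) :
    HasElasticityAt (fun x => sigmaFun φ l (ηf x)) (-(deriv (sigmaFun φ l) (ηf r) *
      homologyV φ l m ηf r * (1 + sigmaFun φ l (ηf r) * homologyU φ l m ηf r))) r := by
  refine (hσd.hasDerivAt.comp r
    (h.hasDerivAt_eta_of_sigmaFun_ne_zero hl hr₁ hR hσ)).congr_deriv ?_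
  field_simp

lemma hasElasticityAt_pressure (hl : -1 < l) (hφ : ∀ c > 0, IntegrableOn φ (Ioo c 1))
    (h : IsEVSolution φ l m ηf r₁ R) (hr₁ : r₁ < r) (hR : r < R)
    (hσ : sigmaFun φ l (ηf r) ≠ 0) (hσd : DifferentiableAt ℝ (sigmaFun φ l) (ηf r)) :
    HasElasticityAt (fun x => pRad φ l x (ηf x)) (2 * l - (1 + sigmaFun φ l (ηf r)) *
      homologyV φ l m ηf r * (1 + sigmaFun φ l (ηf r) * homologyU φ l m ηf r)) r := by
  have hη' := h.hasDerivAt_eta_of_sigmaFun_ne_zero hl hr₁ hR hσ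
  have hexp : HasDerivAt (fun x => Real.exp ((2 * l + 4) * x))
      (Real.exp ((2 * l + 4) * ηf r) * (2 * l + 4)) (ηf r) :=
    ((hasDerivAt_id' (ηf r)).const_mul (2 * l + 4)).exp.congr_deriv (by ring)
  have hG := hasDerivAt_gfun_of_continuousAt_sigmaFun hl hφ (h.eta_pos hr₁ hR) hσ
    hσd.continuousAt
  have hr₀ := (h.radius_pos hr₁ hR).ne'
  have hprod := ((((HasElasticityAt.const (acoef l) r).mul
    ((HasElasticityAt.id hr₀).rpow_const hr₀ (2 * l))).mul (.comp hexp hη')).mul (.comp hG hη'))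
  refine hprod.congr_elasticity ?_
  field_simp
  ring

lemma hasElasticityAt_density (hl : -1 < l) (hφ : ∀ c > 0, IntegrableOn φ (Ioo c 1))
    (h : IsEVSolution φ l m ηf r₁ R) (hr₁ : r₁ < r) (hR : r < R)
    (hσ : sigmaFun φ l (ηf r) ≠ 0) (hσd : DifferentiableAt ℝ (sigmaFun φ l) (ηf r)) :
    HasElasticityAt (fun x => rhoFun φ l x (ηf x))
      (2 * l - (1 + sigmaFun φ l (ηf r) - deriv (sigmaFun φ l) (ηf r)) *
        homologyV φ l m ηf r * (1 + sigmaFun φ l (ηf r) * homologyU φ l m ηf r)) r := by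
  have hquot := (h.hasElasticityAt_pressure hl hφ hr₁ hR hσ hσd).div
    (h.hasElasticityAt_sigma hl hr₁ hR hσ hσd) hσ
  have hcont : ContinuousAt (fun x => sigmaFun φ l (ηf x)) r :=
    hσd.continuousAt.comp (h.hasDerivAt_eta hr₁ hR).continuousAt
  refine (hquot.congr_of_eventuallyEq ?_).congr_elasticity (by ring)
  filter_upwards [hcont.eventually_ne hσ] with x hx
  rw [← sigmaFun_mul_rhoFun hl hx, mul_div_cancel_left₀ _ hx]

lemma hasElasticityAt_homologyU (hl : -1 < l) (hφ : ∀ c > 0, IntegrableOn φ (Ioo c 1))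
    (h : IsEVSolution φ l m ηf r₁ R) (hr₁ : r₁ < r) (hR : r < R)
    (hσ : sigmaFun φ l (ηf r) ≠ 0) (hσd : DifferentiableAt ℝ (sigmaFun φ l) (ηf r)) :
    HasElasticityAt (homologyU φ l m ηf) (homologyURate (3 + 2 * l) (sigmaFun φ l (ηf r))
      (deriv (sigmaFun φ l) (ηf r)) (homologyU φ l m ηf r) (homologyV φ l m ηf r)) r := by
  have hcube : HasElasticityAt (fun x => x ^ 3) 3 r :=
    (hasDerivAt_pow 3 r).congr_deriv (by field_simp; push_cast; ring)
  have hquot := (((HasElasticityAt.const (4 * Real.pi) r).mul hcube).mul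
      (h.hasElasticityAt_density hl hφ hr₁ hR hσ hσd)).div
        (h.hasElasticityAt_mass hr₁ hR) (h.mass_pos hr₁ hR).ne'
  refine hquot.congr_elasticity ?_
  unfold homologyURate
  ring

lemma hasElasticityAt_homologyV (hl : -1 < l) (h : IsEVSolution φ l m ηf r₁ R)
    (hr₁ : r₁ < r) (hR : r < R)
    (hσ : sigmaFun φ l (ηf r) ≠ 0) (hσd : DifferentiableAt ℝ (sigmaFun φ l) (ηf r)) :
    HasElasticityAt (homologyV φ l m ηf) (homologyVRate (sigmaFun φ l (ηf r))
      (deriv (sigmaFun φ l) (ηf r)) (homologyU φ l m ηf r) (homologyV φ l m ηf r)) r := by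
  have hr₀ := h.radius_pos hr₁ hR
  have hgap₀ : r - 2 * m r ≠ 0 := (sub_pos.2 (h.two_mul_mass_lt hr₁ hR)).ne'
  have hmass := h.hasElasticityAt_mass hr₁ hR
  have hgap : HasElasticityAt (fun x => x - 2 * m x)
      ((r - 2 * m r * homologyU φ l m ηf r) / (r - 2 * m r)) r :=
    ((hasDerivAt_id' r).fun_sub (HasDerivAt.const_mul 2 hmass)).congr_deriv (by field_simp)
  have hquot := hmass.div (hgap.mul (h.hasElasticityAt_sigma hl hr₁ hR hσ hσd))
    (mul_ne_zero hgap₀ hσ)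
  have hv : sigmaFun φ l (ηf r) * homologyV φ l m ηf r = m r / (r - 2 * m r) := by
    unfold homologyV; field_simp
  refine hquot.congr_elasticity ?_
  rw [homologyVRate, hv]
  field_simp
  ring

end IsEVSolution

/-! ### Solutions reaching infinity -/

namespace IsEVSolution

variable {φ m ηf : ℝ → ℝ} {l r₁ : ℝ}

lemma exists_mass_deriv_lt_one {a : ℝ} (h : IsEVSolution φ l m ηf r₁ ⊤) (ha : r₁ < a) :
    ∃ r ≥ a, 4 * Real.pi * r ^ 2 * rhoFun φ l r (ηf r) < 1 := by
  by_contra! hge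
  have hderiv : ∀ r ∈ Ici a, HasDerivAt (fun x => m x - x)
      (4 * Real.pi * r ^ 2 * rhoFun φ l r (ηf r) - 1) r := fun r hr =>
    (h.hasDerivAt_mass (ha.trans_le hr) (EReal.coe_lt_top r)).fun_sub (hasDerivAt_id' r)
  have hmono : MonotoneOn (fun x => m x - x) (Ici a) :=
    monotoneOn_of_hasDerivWithinAt_nonneg (convex_Ici a)
      (fun r hr => (hderiv r hr).continuousAt.continuousWithinAt)
      (fun r hr => (hderiv r (interior_subset hr)).hasDerivWithinAt)
      fun r hr => sub_nonneg.2 (hge r (interior_subset hr))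
  have ha₀ : 0 < a := h.radius_pos ha (EReal.coe_lt_top a)
  have hm : 0 < m a := h.mass_pos ha (EReal.coe_lt_top a)
  have hgap : 2 * m (2 * a) < 2 * a :=
    h.two_mul_mass_lt (by linarith) (EReal.coe_lt_top (2 * a))
  have hgrow : m a - a ≤ m (2 * a) - 2 * a :=
    hmono self_mem_Ici (mem_Ici.2 (by linarith)) (by linarith)
  linarith

-- Otherwise `m' ≥ A r ^ (2l + 2)` forever, so that `m` outgrows the bound `2m < r`.
lemma exists_eta_lt {η₀ : ℝ} (hl : -1 < l) (hφ : ∀ c > 0, IntegrableOn φ (Ioo c 1))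
    (hφ₀ : ∀ x ∈ Ioo (0 : ℝ) 1, 0 ≤ φ x) (h : IsEVSolution φ l m ηf r₁ ⊤) (hη₀ : 0 ≤ η₀)
    (hG : 0 < gfun φ (l + 3 / 2) η₀) : ∃ r > r₁, ηf r < η₀ := by
  by_contra! hη
  set A : ℝ := 4 * Real.pi * (3 + 2 * l) * pRad φ l 1 η₀ with hA
  have hA₀ : 0 < A := by
    have hp := pRad_pos hl one_pos hG
    have hl₀ : 0 < 3 + 2 * l := by linarith
    positivity
  have hbound : ∀ r > 0, r₁ < r → A * r ^ (2 + 2 * l) ≤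
      4 * Real.pi * r ^ 2 * rhoFun φ l r (ηf r) := by
    intro r hr hr₁
    calc A * r ^ (2 + 2 * l) =
          4 * Real.pi * r ^ 2 * ((3 + 2 * l) * (r ^ (2 * l) * pRad φ l 1 η₀)) := by
            rw [hA, Real.rpow_add hr, Real.rpow_two]; ring
      _ ≤ 4 * Real.pi * r ^ 2 * rhoFun φ l r (ηf r) := by
            gcongr
            exact mul_rpow_mul_pRad_le_rhoFun hl hφ hφ₀ hη₀ (hη r hr₁) hr.le
  have htop : Tendsto (fun r : ℝ => A * r ^ (2 + 2 * l)) atTop atTop :=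
    (tendsto_rpow_atTop (by linarith)).const_mul_atTop hA₀
  obtain ⟨a, ha⟩ := eventually_atTop.1 <| (htop.eventually_ge_atTop 1).and <|
    (eventually_gt_atTop r₁).and (eventually_gt_atTop 0)
  obtain ⟨r, hr, hlt⟩ := h.exists_mass_deriv_lt_one (ha a le_rfl).2.1
  obtain ⟨hone, hr₁, hr₀⟩ := ha r hr
  exact (hone.trans (hbound r hr₀ hr₁)).not_gt hlt

lemma eventually_eta_lt {η₀ : ℝ} (hl : -1 < l) (hφ : ∀ c > 0, IntegrableOn φ (Ioo c 1))
    (hφ₀ : ∀ x ∈ Ioo (0 : ℝ) 1, 0 ≤ φ x) (h : IsEVSolution φ l m ηf r₁ ⊤) (hη₀ : 0 ≤ η₀)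
    (hG : 0 < gfun φ (l + 3 / 2) η₀) : ∀ᶠ r in atTop, ηf r < η₀ := by
  obtain ⟨b, hb, hηb⟩ := h.exists_eta_lt hl hφ hφ₀ hη₀ hG
  filter_upwards [eventually_ge_atTop b] with r hr
  exact (h.antitoneOn_eta hl hφ₀ ⟨hb, EReal.coe_lt_top b⟩ ⟨hb.trans_le hr, EReal.coe_lt_top r⟩
    hr).trans_lt hηb

end IsEVSolution

section SteepSigma

variable {φ : ℝ → ℝ} {l η : ℝ}

lemma one_add_mul_sigmaFun_le_mul_deriv (hl : -1 < l)
    (hsteep : 1 / (4 + 2 * l) + (7 + 4 * l) / (4 + 2 * l) * sigmaFun φ l η ≤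
      deriv (sigmaFun φ l) η) :
    1 + (2 * (3 + 2 * l) + 1) * sigmaFun φ l η ≤
      (3 + 2 * l + 1) * deriv (sigmaFun φ l) η := by
  have hl₀ : 0 < 4 + 2 * l := by linarith
  calc 1 + (2 * (3 + 2 * l) + 1) * sigmaFun φ l η =
        (4 + 2 * l) * (1 / (4 + 2 * l) + (7 + 4 * l) / (4 + 2 * l) * sigmaFun φ l η) := by
        field_simp
        ring
    _ ≤ (4 + 2 * l) * deriv (sigmaFun φ l) η := by gcongr
    _ = (3 + 2 * l + 1) * deriv (sigmaFun φ l) η := by ring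

lemma deriv_sigmaFun_pos (hl : -1 < l) (hφ₀ : ∀ x ∈ Ioo (0 : ℝ) 1, 0 ≤ φ x) (hη : 0 ≤ η)
    (hsteep : 1 / (4 + 2 * l) + (7 + 4 * l) / (4 + 2 * l) * sigmaFun φ l η ≤
      deriv (sigmaFun φ l) η) : 0 < deriv (sigmaFun φ l) η := by
  have hσ := sigmaFun_nonneg hl hφ₀ hη
  have hl₁ : 0 < 4 + 2 * l := by linarith
  have hl₂ : 0 < 7 + 4 * l := by linarith
  exact lt_of_lt_of_le (by positivity) hsteep

end SteepSigma

theorem not_isEVSolution_top {φ m ηf : ℝ → ℝ} {l ηhat r₁ : ℝ} (hl : -1 < l)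
    (hφ : ∀ c > 0, IntegrableOn φ (Ioo c 1)) (hφ₀ : ∀ x ∈ Ioo (0 : ℝ) 1, 0 ≤ φ x)
    (hηhat : 0 < ηhat)
    (hsteep : ∀ η, 0 < η → η ≤ ηhat →
      1 / (4 + 2 * l) + (7 + 4 * l) / (4 + 2 * l) * sigmaFun φ l η ≤ deriv (sigmaFun φ l) η) :
    ¬ IsEVSolution φ l m ηf r₁ ⊤ := by
  intro h
  have hN₁ : 1 < 3 + 2 * l := by linarith
  have hN : 0 < 3 + 2 * l := by linarith
  have hσhat : 0 < sigmaFun φ l ηhat :=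
    sigmaFun_pos_of_deriv_ne_zero hl hφ₀ hηhat
      (deriv_sigmaFun_pos hl hφ₀ hηhat.le (hsteep ηhat hηhat le_rfl)).ne'
  obtain ⟨a, ha⟩ := eventually_atTop.1 <| (h.eventually_eta_lt hl hφ hφ₀ hηhat.le
    (gfun_pos_of_sigmaFun_ne_zero hφ₀ hηhat.le hσhat.ne')).and (eventually_gt_atTop (max r₁ 0))
  have ha₀ : 0 < a := (le_max_right _ _).trans_lt (ha a le_rfl).2
  have hr₁ : ∀ r ≥ a, r₁ < r := fun r hr => (le_max_left _ _).trans_lt (ha r hr).2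
  have hη : ∀ r ≥ a, 0 < ηf r := fun r hr => h.eta_pos (hr₁ r hr) (EReal.coe_lt_top r)
  have hsteep_η := fun r hr => hsteep (ηf r) (hη r hr) (ha r hr).1.le
  have hsteep_N := fun r hr => one_add_mul_sigmaFun_le_mul_deriv hl (hsteep_η r hr)
  have hσ' := fun r hr => deriv_sigmaFun_pos hl hφ₀ (hη r hr).le (hsteep_η r hr)
  have hσ := fun r hr => sigmaFun_pos_of_deriv_ne_zero hl hφ₀ (hη r hr) (hσ' r hr).ne'
  have hσd := fun r hr => differentiableAt_of_deriv_ne_zero (hσ' r hr).ne'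
  have hu : ∀ r ≥ a, 0 < homologyU φ l m ηf r := fun r hr =>
    h.homologyU_pos hl hφ₀ (hr₁ r hr) (EReal.coe_lt_top r) (hσ r hr)
  have hv : ∀ r ≥ a, 0 < homologyV φ l m ηf r := fun r hr =>
    h.homologyV_pos (hr₁ r hr) (EReal.coe_lt_top r) (hσ r hr)
  have hκ : 0 < (1 - 1 / (3 + 2 * l)) / (3 + 2 * l + 1) :=
    div_pos (sub_pos.2 ((div_lt_one hN).2 hN₁)) (by linarith)
  exact false_of_elasticity_bounds ha₀ (sub_pos.2 hN₁) hN.le one_pos one_pos hκ hu hv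
    (fun r hr => h.hasElasticityAt_homologyU hl hφ (hr₁ r hr) (EReal.coe_lt_top r)
      (hσ r hr).ne' (hσd r hr))
    (fun r hr => h.hasElasticityAt_homologyV hl (hr₁ r hr) (EReal.coe_lt_top r)
      (hσ r hr).ne' (hσd r hr))
    (fun r hr => sub_one_mul_le_homologyURate_add hN.le (hσ r hr).le (hu r hr).le (hv r hr).le
      (hsteep_N r hr))
    (fun r hr => neg_one_add_mul_le_homologyVRate hN (hσ r hr).le
      (sigmaFun_le hl hφ₀ (hη r hr).le) (hu r hr).le (hv r hr).le (hsteep_N r hr))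
    fun r hr hlarge => one_le_homologyVRate (hσ r hr).le (hσ' r hr).le hlarge (hv r hr).le

theorem stmt0_general
    (l : ℝ) (hl : -1 < l)
    (φ : ℝ → ℝ)
    (hφ : ∀ c > 0, IntegrableOn φ (Ioo c 1))
    (hφnonneg : ∀ x ∈ Ioo (0 : ℝ) 1, 0 ≤ φ x)
    (ηhat : ℝ) (hηhat : 0 < ηhat)
    (hmain : ∀ η : ℝ, 0 < η → η ≤ ηhat →
      1 / (4 + 2 * l) + (7 + 4 * l) / (4 + 2 * l) * sigmaFun φ l η
        ≤ deriv (sigmaFun φ l) η)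
    (r₁ : ℝ) (R : EReal)
    (m ηf : ℝ → ℝ)
    (hsol : IsEVSolution φ l m ηf r₁ R) :
    R < ⊤ ∧ ∃ Mb : ℝ, ∀ r : ℝ, r₁ < r → (r : EReal) < R → m r ≤ Mb := by
  have hR : R < ⊤ := lt_top_iff_ne_top.2 fun htop =>
    not_isEVSolution_top hl hφ hφnonneg hηhat hmain (htop ▸ hsol)
  refine ⟨hR, R.toReal / 2, fun r hr₁ hrR => ?_⟩
  have hrR' : r ≤ R.toReal :=
    EReal.coe_le_coe_iff.1 (hrR.le.trans (EReal.le_coe_toReal hR.ne))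
  linarith [hsol.two_mul_mass_lt hr₁ hrR]

/-- If there is `η̂ > 0` with
`σ'(η) ≥ 1/(4+2l) + ((7+4l)/(4+2l))·σ(η)` for all `0 < η ≤ η̂`, then every solution
of the static Einstein–Vlasov equations (on a maximal interval `(r₁,R)`) has finite
radius `R < ∞` and finite mass `sup m < ∞`. -/
theorem stmt0
    (l : ℝ) (hl : -1 < l)
    (φ : ℝ → ℝ)
    (hφcont : ContinuousOn φ (Ioo 0 1))
    (hφnonneg : ∀ x ∈ Ioo (0:ℝ) 1, 0 ≤ φ x)
    (hφne : ∃ x ∈ Ioo (0:ℝ) 1, φ x ≠ 0)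
    (hφbound : ∃ C > (0:ℝ), ∃ ε > (0:ℝ), ∃ δ ∈ Ioo (0:ℝ) 1,
      ∀ x ∈ Ioo (1 - δ) 1, φ x ≤ C * (1 - x) ^ (-1 + ε))
    (hφholder : l < -(1/2) → ∃ α > -l - 1/2, ∃ Cα > (0:ℝ),
      ∀ x ∈ Ioo (0:ℝ) 1, ∀ y ∈ Ioo (0:ℝ) 1, |φ x - φ y| ≤ Cα * |x - y| ^ α)
    (k₁ k₂ : ℝ) (hk₁ : 0 < k₁) (hk₁₂ : k₁ < k₂)
    (hσ'near : ∃ η₀ > (0:ℝ), ∀ η ∈ Ioo (0:ℝ) η₀, deriv (sigmaFun φ l) η ∈ Ioo k₁ k₂)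
    (ηhat : ℝ) (hηhat : 0 < ηhat)
    (hmain : ∀ η : ℝ, 0 < η → η ≤ ηhat →
      1 / (4 + 2 * l) + (7 + 4 * l) / (4 + 2 * l) * sigmaFun φ l η
        ≤ deriv (sigmaFun φ l) η)
    (r₁ : ℝ) (hr₁ : 0 ≤ r₁) (R : EReal) (hRr₁ : (r₁ : EReal) < R)
    (m ηf : ℝ → ℝ)
    (hsol : IsEVSolution φ l m ηf r₁ R)
    (hmax : ∀ R' : EReal, R < R' → ∀ m' ηf' : ℝ → ℝ,
      (∀ r : ℝ, r₁ < r → (r : EReal) < R → m' r = m r ∧ ηf' r = ηf r) →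
      ¬ IsEVSolution φ l m' ηf' r₁ R') :
    R < ⊤ ∧ ∃ Mb : ℝ, ∀ r : ℝ, r₁ < r → (r : EReal) < R → m r ≤ Mb := by
  obtain ⟨C, -, ε, hε, δ, hδ, hbound⟩ := hφbound
  have hφ : ∀ c > 0, IntegrableOn φ (Ioo c 1) := fun c hc =>
    integrableOn_Ioo_of_norm_le_rpow (by linarith) hδ.1 hc hφcont fun x hx =>
      (Real.norm_of_nonneg (hφnonneg x ⟨by linarith [hx.1, hδ.2], hx.2⟩)).trans_le (hbound x hx)
  exact stmt0_general l hl φ hφ hφnonneg ηhat hηhat hmain r₁ R m ηf hsol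
end

section
/- Suppose there exists η̂ > 0 such that σ'(η) ≥ 1/(4+2l) + ((7+4l)/(4+2l))·σ(η) for all 0 < η ≤ η̂. Then every interior orbit of the Einstein–Vlasov dynamical system satisfies Ω(λ) → 0 and V(λ) → 1 as λ → +∞; that is, the ω-limit set of every interior orbit lies in {Ω = 0} ∩ {V = 1}. -/
open Filter Set

/-! In the logit coordinates `x = log (U / (1 - U))` and `y = log (V / (1 - V))` the function
`W = x + (3 + 2l) y` satisfies `W' = (2 + 2l) U (1 - V) + V R`, where `R` is bounded as long as
`σ` and `σ'` are, and the hypothesis on `σ'` makes `R` nonnegative for small `η`.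

If `V` were integrable near `+∞` along an orbit with bounded `σ` and `σ'`, then `V → 0`, hence
`y → -∞`, while `W` would stay bounded below; this forces `U → 1`, whence `y' → 1`, a contradiction.
Since `-Ω'` is bounded below by a positive multiple of `V` as long as `η` stays away from `0`,
this shows `η → 0`, that is, `Ω → 0`.

Then `W` is eventually nondecreasing. If `W` converges, then `U (1 - V)` is integrable, so it
tends to `0`; as `W` is bounded below, `y` can be bounded only where `U (1 - V)` is bounded away
from `0`, so `y → +∞`. If `W → +∞`, then `U` is large wherever `y` is bounded above, and there `y'`
is bounded below by a positive constant, so again `y → +∞`. Both cases give `V → 1`. -/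

open MeasureTheory Asymptotics Topology

theorem isBigO_one_comp_of_continuous {α E F : Type*} [NormedAddCommGroup E] [ProperSpace E]
    [NormedAddCommGroup F] {l : Filter α} {X : α → E} {φ : E → F} (hφ : Continuous φ)
    (hX : X =O[l] (1 : α → ℝ)) : (fun t ↦ φ (X t)) =O[l] (1 : α → ℝ) := by
  obtain ⟨K, hK⟩ := hX.bound
  obtain ⟨C, hC⟩ :=
    (isCompact_closedBall (0 : E) K).exists_bound_of_continuousOn hφ.continuousOn
  refine .of_bound C (hK.mono fun t ht ↦ ?_)
  simpa using hC (X t) (by simpa using ht)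

section EventualDerivatives

variable {f g g' : ℝ → ℝ}

theorem tendsto_atTop_or_exists_tendsto_of_deriv_nonneg
    (hg : ∀ᶠ t in atTop, HasDerivAt g (g' t) t) (hg' : ∀ᶠ t in atTop, 0 ≤ g' t) :
    Tendsto g atTop atTop ∨ ∃ L, Tendsto g atTop (𝓝 L) := by
  obtain ⟨T, hT⟩ := eventually_atTop.1 (hg.and hg')
  have hmono : MonotoneOn g (Ici T) := by
    refine monotoneOn_of_deriv_nonneg (convex_Ici T)
      (fun t ht ↦ (hT t ht).1.continuousAt.continuousWithinAt)
      (fun t ht ↦ (hT t (interior_subset ht)).1.differentiableAt.differentiableWithinAt)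
      fun t ht ↦ ?_
    have := hT t (interior_subset ht)
    exact this.1.deriv ▸ this.2
  have hmax : Monotone fun t ↦ g (max T t) := fun x y hxy ↦
    hmono (le_max_left T x) (le_max_left T y) (max_le_max_left T hxy)
  have hcongr : (fun t ↦ g (max T t)) =ᶠ[atTop] g :=
    (eventually_ge_atTop T).mono fun t ht ↦ by simp only [max_eq_right ht]
  exact (tendsto_atTop_of_monotone hmax).imp (fun h ↦ h.congr' hcongr)
    fun ⟨L, hL⟩ ↦ ⟨L, hL.congr' hcongr⟩

theorem integrableAtFilter_deriv_of_nonneg (hg : ∀ᶠ t in atTop, HasDerivAt g (g' t) t)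
    (hg' : ∀ᶠ t in atTop, 0 ≤ g' t) (hb : IsBoundedUnder (· ≤ ·) atTop g) :
    IntegrableAtFilter g' atTop := by
  obtain ⟨L, hL⟩ := (tendsto_atTop_or_exists_tendsto_of_deriv_nonneg hg hg').resolve_left
    fun h ↦ not_isBoundedUnder_of_tendsto_atTop h hb
  obtain ⟨T, hT⟩ := eventually_atTop.1 (hg.and hg')
  exact ⟨Ioi T, Ioi_mem_atTop T, integrableOn_Ioi_deriv_of_nonneg'
    (fun t ht ↦ (hT t ht).1) (fun t ht ↦ (hT t (le_of_lt ht)).2) hL⟩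

theorem isBoundedUnder_le_of_deriv_le_of_integrable (hg : ∀ᶠ t in atTop, HasDerivAt g (g' t) t)
    (hgf : ∀ᶠ t in atTop, g' t ≤ f t) (hf : IntegrableAtFilter f atTop) :
    IsBoundedUnder (· ≤ ·) atTop g := by
  obtain ⟨T₀, hint⟩ := integrableAtFilter_atTop_iff.1 hf
  obtain ⟨T, hT⟩ := eventually_atTop.1 ((hg.and hgf).and (eventually_ge_atTop T₀))
  have hint' : IntegrableOn f (Ici T) := hint.mono_set (Ici_subset_Ici.2 (hT T le_rfl).2)
  refine isBoundedUnder_of_eventually_le (a := g T + ∫ x in Ici T, ‖f x‖) ?_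
  filter_upwards [eventually_ge_atTop T] with t ht
  have hincr : g t - g T ≤ ∫ x in T..t, ‖f x‖ :=
    intervalIntegral.sub_le_integral_of_hasDeriv_right_of_le ht
      (fun x hx ↦ (hT x hx.1).1.1.continuousAt.continuousWithinAt)
      (fun x hx ↦ (hT x hx.1.le).1.1.hasDerivWithinAt)
      (IntegrableOn.mono_set hint'.norm Icc_subset_Ici_self)
      (fun x hx ↦ (hT x hx.1.le).1.2.trans (Real.le_norm_self _))
  have hle : ∫ x in T..t, ‖f x‖ ≤ ∫ x in Ici T, ‖f x‖ := by
    rw [intervalIntegral.integral_of_le ht]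
    exact setIntegral_mono_set hint'.norm (ae_of_all _ fun _ ↦ norm_nonneg _)
      (Ioc_subset_Ioi_self.trans Ioi_subset_Ici_self).eventuallyLE
  linarith

theorem tendsto_zero_of_integrableAtFilter_of_deriv_isBigO_self {E : Type*}
    [NormedAddCommGroup E] [NormedSpace ℝ E] [CompleteSpace E] {f : ℝ → E}
    (hf : ∀ᶠ t in atTop, DifferentiableAt ℝ f t) (hf' : deriv f =O[atTop] f)
    (hint : IntegrableAtFilter f atTop) : Tendsto f atTop (𝓝 0) := by
  have hint' : IntegrableAtFilter (deriv f) atTop :=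
    hf'.integrableAtFilter (stronglyMeasurable_deriv f).stronglyMeasurableAtFilter hint
  obtain ⟨T₁, h₁⟩ := integrableAtFilter_atTop_iff.1 hint
  obtain ⟨T₂, h₂⟩ := integrableAtFilter_atTop_iff.1 hint'
  obtain ⟨T, hT⟩ := eventually_atTop.1
    (hf.and ((eventually_ge_atTop T₁).and (eventually_ge_atTop T₂)))
  obtain ⟨-, hT₁, hT₂⟩ := hT T le_rfl
  exact tendsto_zero_of_hasDerivAt_of_integrableOn_Ioi
    (fun t ht ↦ (hT t (le_of_lt ht)).1.hasDerivAt)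
    (h₂.mono_set (Ioi_subset_Ici hT₂)) (h₁.mono_set (Ioi_subset_Ici hT₁))

theorem eventually_ge_of_le_deriv_of_le {b c : ℝ} (hc : 0 < c)
    (hg : ∀ᶠ t in atTop, HasDerivAt g (g' t) t)
    (hgb : ∀ᶠ t in atTop, g t ≤ b → c ≤ g' t) : ∀ᶠ t in atTop, b ≤ g t := by
  obtain ⟨T, hT⟩ := eventually_atTop.1 (hg.and hgb)
  obtain ⟨t₀, hTt₀, hbt₀⟩ : ∃ t₀ ≥ T, b ≤ g t₀ := by
    by_contra! hlt
    have hbdd : IsBoundedUnder (· ≤ ·) atTop fun t ↦ c * t - g t :=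
      isBoundedUnder_le_of_deriv_le_of_integrable (f := 0) (g' := fun t ↦ c - g' t)
        (hg.mono fun t ht ↦ by simpa using ((hasDerivAt_id' t).const_mul c).fun_sub ht)
        ((eventually_ge_atTop T).mono fun t ht ↦ sub_nonpos.2 ((hT t ht).2 (hlt t ht).le))
        ⟨univ, univ_mem, integrableOn_zero⟩
    have htop : Tendsto (fun t ↦ c * t - b) atTop atTop :=
      tendsto_atTop_add_const_right _ (-b) (tendsto_id.const_mul_atTop hc)
    exact not_isBoundedUnder_of_tendsto_atTop (tendsto_atTop_mono' _
      ((eventually_ge_atTop T).mono fun t ht ↦ sub_le_sub_left (hlt t ht).le _) htop) hbdd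
  filter_upwards [eventually_ge_atTop t₀] with t ht
  have hstay : ∀ ⦃x⦄, x ∈ Icc t₀ t → -g x ≤ -b :=
    image_le_of_deriv_right_lt_deriv_boundary (f' := fun x ↦ -g' x) (B' := fun _ ↦ 0)
      (fun x hx ↦ (hT x (hTt₀.le.trans hx.1)).1.continuousAt.continuousWithinAt.neg)
      (fun x hx ↦ (hT x (hTt₀.le.trans hx.1)).1.neg.hasDerivWithinAt)
      (neg_le_neg hbt₀) (fun x ↦ hasDerivAt_const x (-b)) fun x hx hxb ↦
        neg_neg_of_pos (hc.trans_le ((hT x (hTt₀.le.trans hx.1)).2 (neg_inj.1 hxb).le))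
  exact neg_le_neg_iff.1 (hstay (right_mem_Icc.2 ht))

end EventualDerivatives

section Logit

/-- The logit function `log (u / (1 - u))`, inverse to `Real.sigmoid` on `(0, 1)`. It linearizes the
factors `U (1 - U)` and `V (1 - V)` of the dynamical system. It takes junk values outside
`(0, 1)`. -/
noncomputable def logit (u : ℝ) : ℝ := Real.log (u / (1 - u))

variable {u : ℝ}

theorem sigmoid_logit (hu : u ∈ Ioo 0 1) : Real.sigmoid (logit u) = u := by
  have h₀ : u ≠ 0 := hu.1.ne'
  have h₁ : 0 < 1 - u := sub_pos.2 hu.2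
  rw [Real.sigmoid_def, logit, ← Real.log_inv, Real.exp_log (inv_pos.2 (div_pos hu.1 h₁))]
  field_simp
  ring

theorem le_logit_iff_sigmoid_le (hu : u ∈ Ioo 0 1) {x : ℝ} :
    x ≤ logit u ↔ Real.sigmoid x ≤ u := by
  rw [← Real.sigmoid_le_iff, sigmoid_logit hu]

theorem logit_le_iff_le_sigmoid (hu : u ∈ Ioo 0 1) {x : ℝ} :
    logit u ≤ x ↔ u ≤ Real.sigmoid x := by
  rw [← Real.sigmoid_le_iff, sigmoid_logit hu]

theorem hasDerivAt_logit (hu : u ∈ Ioo 0 1) : HasDerivAt logit (u * (1 - u))⁻¹ u := by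
  have h₀ : u ≠ 0 := hu.1.ne'
  have h₁ : 1 - u ≠ 0 := (sub_pos.2 hu.2).ne'
  have hdiv := ((hasDerivAt_id' u).fun_div ((hasDerivAt_id' u).const_sub 1) h₁).log
    (div_ne_zero h₀ h₁)
  refine hdiv.congr_deriv ?_
  field_simp
  ring

variable {α : Type*} {F : Filter α} {f : α → ℝ}

theorem tendsto_logit_atBot (hf : ∀ t, f t ∈ Ioo 0 1) (h : Tendsto f F (𝓝 0)) :
    Tendsto (fun t ↦ logit (f t)) F atBot :=
  tendsto_atBot.2 fun b ↦ (h.eventually_le_const (Real.sigmoid_pos b)).mono fun t ht ↦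
    (logit_le_iff_le_sigmoid (hf t)).2 ht

theorem tendsto_one_of_tendsto_logit_atTop (hf : ∀ t, f t ∈ Ioo 0 1)
    (h : Tendsto (fun t ↦ logit (f t)) F atTop) : Tendsto f F (𝓝 1) :=
  (Real.tendsto_sigmoid_atTop.comp h).congr fun t ↦ sigmoid_logit (hf t)

end Logit

theorem strictMonoOn_div_one_add : StrictMonoOn (fun x : ℝ ↦ x / (1 + x)) (Ioi (-1)) :=
  fun x (hx : -1 < x) y (hy : -1 < y) hxy ↦
    (div_lt_div_iff₀ (by linarith) (by linarith)).2 (by linarith)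

namespace EinsteinVlasov

/-- The factor `H = (1 - U + σ U) V` of the Einstein–Vlasov dynamical system. -/
def H (s u v : ℝ) : ℝ := (1 - u + s * u) * v

theorem H_nonneg {s u v : ℝ} (hs : 0 ≤ s) (hu : u ∈ Icc 0 1) (hv : 0 ≤ v) : 0 ≤ H s u v :=
  mul_nonneg (add_nonneg (sub_nonneg.2 hu.2) (mul_nonneg hs hu.1)) hv

theorem min_one_mul_le_H {s u v : ℝ} (hu : u ∈ Ioo 0 1) (hv : 0 ≤ v) : min 1 s * v ≤ H s u v :=
  mul_le_mul_of_nonneg_right (by nlinarith [hu.1, hu.2, min_le_left 1 s, min_le_right 1 s]) hv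

/-- The rate of change of `logit U` in the Einstein–Vlasov dynamical system, where `s` and `p` are
the values of `σ` and `σ'`. -/
def uRate (l s p u v : ℝ) : ℝ := (3 + 2 * l - (4 + 2 * l) * u) * (1 - v) - (1 + s - p) * H s u v

/-- The rate of change of `logit V` in the Einstein–Vlasov dynamical system, where `s` and `p` are
the values of `σ` and `σ'`. -/
def vRate (s p u v : ℝ) : ℝ := (2 * u - 1) * (1 - v + 2 * s * v) + p * H s u v

/-- A solution `(U, V)` in the open unit square of the first two equations of the Einstein–Vlasov
dynamical system. The third variable enters them only through `σ` and `σ'`, which are represented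
by arbitrary functions `s` and `p` of time. -/
structure IsInteriorOrbit (l : ℝ) (s p U V : ℝ → ℝ) : Prop where
  U_mem : ∀ t, U t ∈ Ioo 0 1
  V_mem : ∀ t, V t ∈ Ioo 0 1
  hasDerivAt_U : ∀ t, HasDerivAt U (U t * (1 - U t) * uRate l (s t) (p t) (U t) (V t)) t
  hasDerivAt_V : ∀ t, HasDerivAt V (V t * (1 - V t) * vRate (s t) (p t) (U t) (V t)) t

/-- The function `log (U / (1 - U)) + (3 + 2 l) log (V / (1 - V))`, which is eventually monotone
along interior orbits. The weight `3 + 2 l` turns the terms of its derivative that do not involve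
`σ` and `σ'` into `(2 + 2 l) U (1 - V) - V (1 - U)`. -/
noncomputable def lyapunov (l u v : ℝ) : ℝ := logit u + (3 + 2 * l) * logit v

/-- The rate of change of `lyapunov` along interior orbits. -/
def lyapunovRate (l s p u v : ℝ) : ℝ := uRate l s p u v + (3 + 2 * l) * vRate s p u v

/-- The coefficient of `V` that remains in `lyapunovRate` once the nonnegative term
`(2 + 2 l) U (1 - V)` is split off. -/
def lyapunovRemainder (l s p u : ℝ) : ℝ :=
  2 * (3 + 2 * l) * s * (2 * u - 1) + ((4 + 2 * l) * p - 1 - s) * (1 - u + s * u)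

theorem lyapunovRate_eq (l s p u v : ℝ) :
    lyapunovRate l s p u v = (2 + 2 * l) * (u * (1 - v)) + v * lyapunovRemainder l s p u := by
  unfold lyapunovRate uRate vRate lyapunovRemainder H
  ring

theorem lyapunovRemainder_nonneg {l s p u : ℝ} (hl : -1 < l) (hu : u ∈ Ioo 0 1) (hs : 0 ≤ s)
    (hp : 1 + (7 + 4 * l) * s ≤ (4 + 2 * l) * p) : 0 ≤ lyapunovRemainder l s p u := by
  have hu₁ : 0 ≤ 1 - u + s * u := by nlinarith [hu.1, hu.2]
  have hl' : 0 ≤ 2 * (3 + 2 * l) := by linarith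
  calc 0 ≤ 2 * (3 + 2 * l) * (s * u * (1 + s)) :=
        mul_nonneg hl' (mul_nonneg (mul_nonneg hs hu.1.le) (by linarith))
    _ = 2 * (3 + 2 * l) * s * (2 * u - 1) + 2 * (3 + 2 * l) * s * (1 - u + s * u) := by ring
    _ ≤ lyapunovRemainder l s p u := by
        unfold lyapunovRemainder
        gcongr
        linarith

theorem le_lyapunovRate {l s p u v : ℝ} (hl : -1 < l) (hu : u ∈ Ioo 0 1) (hv : 0 ≤ v) (hs : 0 ≤ s)
    (hp : 1 + (7 + 4 * l) * s ≤ (4 + 2 * l) * p) :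
    (2 + 2 * l) * (u * (1 - v)) ≤ lyapunovRate l s p u v := by
  rw [lyapunovRate_eq]
  exact le_add_of_nonneg_right (mul_nonneg hv (lyapunovRemainder_nonneg hl hu hs hp))

theorem sigmoid_le_of_le_lyapunov {l u v a b : ℝ} (hl : -1 < l) (hu : u ∈ Ioo 0 1)
    (hw : a + (3 + 2 * l) * b ≤ lyapunov l u v) (hv : logit v ≤ b) : Real.sigmoid a ≤ u := by
  rw [← le_logit_iff_sigmoid_le hu]
  unfold lyapunov at hw
  linarith [mul_le_mul_of_nonneg_left hv (by linarith : 0 ≤ 3 + 2 * l)]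

theorem le_vRate {s p u v : ℝ} (hu : 2⁻¹ ≤ u) (hu₁ : u ≤ 1) (hv : 0 ≤ v) (hs : 0 ≤ s)
    (hp : 0 ≤ p) : (2 * u - 1) * (1 - v) ≤ vRate s p u v := by
  have hu₀ : 0 ≤ 2 * u - 1 := by linarith
  have hH : 0 ≤ H s u v := H_nonneg hs ⟨by linarith, hu₁⟩ hv
  calc (2 * u - 1) * (1 - v) ≤ (2 * u - 1) * (1 - v + 2 * s * v) :=
        mul_le_mul_of_nonneg_left (le_add_of_nonneg_right (by positivity)) hu₀
    _ ≤ vRate s p u v := le_add_of_nonneg_right (mul_nonneg hp hH)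

namespace IsInteriorOrbit

variable {l : ℝ} {s p U V : ℝ → ℝ}

theorem continuous_U (h : IsInteriorOrbit l s p U V) : Continuous U :=
  continuous_iff_continuousAt.2 fun t ↦ (h.hasDerivAt_U t).continuousAt

theorem continuous_V (h : IsInteriorOrbit l s p U V) : Continuous V :=
  continuous_iff_continuousAt.2 fun t ↦ (h.hasDerivAt_V t).continuousAt

theorem mul_one_sub_V_pos (h : IsInteriorOrbit l s p U V) (t : ℝ) : 0 < U t * (1 - V t) :=
  mul_pos (h.U_mem t).1 (sub_pos.2 (h.V_mem t).2)

theorem hasDerivAt_logit_U (h : IsInteriorOrbit l s p U V) (t : ℝ) :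
    HasDerivAt (fun t ↦ logit (U t)) (uRate l (s t) (p t) (U t) (V t)) t :=
  ((hasDerivAt_logit (h.U_mem t)).comp t (h.hasDerivAt_U t)).congr_deriv <|
    inv_mul_cancel_left₀ (mul_pos (h.U_mem t).1 (sub_pos.2 (h.U_mem t).2)).ne' _

theorem hasDerivAt_logit_V (h : IsInteriorOrbit l s p U V) (t : ℝ) :
    HasDerivAt (fun t ↦ logit (V t)) (vRate (s t) (p t) (U t) (V t)) t :=
  ((hasDerivAt_logit (h.V_mem t)).comp t (h.hasDerivAt_V t)).congr_deriv <|
    inv_mul_cancel_left₀ (mul_pos (h.V_mem t).1 (sub_pos.2 (h.V_mem t).2)).ne' _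

theorem hasDerivAt_lyapunov (h : IsInteriorOrbit l s p U V) (t : ℝ) :
    HasDerivAt (fun t ↦ lyapunov l (U t) (V t)) (lyapunovRate l (s t) (p t) (U t) (V t)) t :=
  (h.hasDerivAt_logit_U t).fun_add ((h.hasDerivAt_logit_V t).const_mul (3 + 2 * l))

theorem isBigO_one (h : IsInteriorOrbit l s p U V) (hs : s =O[atTop] (1 : ℝ → ℝ))
    (hp : p =O[atTop] (1 : ℝ → ℝ)) {φ : ℝ × ℝ × ℝ × ℝ → ℝ} (hφ : Continuous φ) :
    (fun t ↦ φ (s t, p t, U t, V t)) =O[atTop] (1 : ℝ → ℝ) := by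
  have isBigO_of_mem {f : ℝ → ℝ} (hf : ∀ t, f t ∈ Ioo 0 1) : f =O[atTop] (1 : ℝ → ℝ) :=
    .of_bound' (.of_forall fun t ↦ by
      simpa [abs_of_pos (hf t).1] using (hf t).2.le)
  exact isBigO_one_comp_of_continuous hφ
    (hs.prod_left (hp.prod_left ((isBigO_of_mem h.U_mem).prod_left (isBigO_of_mem h.V_mem))))

theorem tendsto_V_zero_of_integrable (h : IsInteriorOrbit l s p U V)
    (hs : s =O[atTop] (1 : ℝ → ℝ)) (hp : p =O[atTop] (1 : ℝ → ℝ))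
    (hV : IntegrableAtFilter V atTop) : Tendsto V atTop (𝓝 0) := by
  refine tendsto_zero_of_integrableAtFilter_of_deriv_isBigO_self
    (.of_forall fun t ↦ (h.hasDerivAt_V t).differentiableAt) ?_ hV
  have hrate : (fun t ↦ (1 - V t) * vRate (s t) (p t) (U t) (V t)) =O[atTop] (1 : ℝ → ℝ) :=
    h.isBigO_one hs hp (φ := fun x ↦ (1 - x.2.2.2) * vRate x.1 x.2.1 x.2.2.1 x.2.2.2)
      (by unfold vRate H; fun_prop)
  have hderiv : deriv V = fun t ↦ V t * ((1 - V t) * vRate (s t) (p t) (U t) (V t)) :=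
    funext fun t ↦ by rw [(h.hasDerivAt_V t).deriv, mul_assoc]
  simpa only [hderiv, Pi.one_apply, mul_one] using (isBigO_refl V atTop).mul hrate

theorem isBoundedUnder_neg_lyapunov_of_integrable (hl : -1 < l)
    (h : IsInteriorOrbit l s p U V) (hs : s =O[atTop] (1 : ℝ → ℝ)) (hp : p =O[atTop] (1 : ℝ → ℝ))
    (hV : IntegrableAtFilter V atTop) :
    IsBoundedUnder (· ≤ ·) atTop fun t ↦ -lyapunov l (U t) (V t) := by
  have hrem : (fun t ↦ lyapunovRemainder l (s t) (p t) (U t)) =O[atTop] (1 : ℝ → ℝ) :=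
    h.isBigO_one hs hp (φ := fun x ↦ lyapunovRemainder l x.1 x.2.1 x.2.2.1)
      (by unfold lyapunovRemainder; fun_prop)
  obtain ⟨C, hC⟩ := hrem.bound
  refine isBoundedUnder_le_of_deriv_le_of_integrable
    (.of_forall fun t ↦ (h.hasDerivAt_lyapunov t).neg) (hC.mono fun t ht ↦ ?_) (hV.smul C)
  have hrem' : -lyapunovRemainder l (s t) (p t) (U t) ≤ C := by
    simpa using (neg_le_abs _).trans ht
  calc -lyapunovRate l (s t) (p t) (U t) (V t)
      = -((2 + 2 * l) * (U t * (1 - V t))) + V t * -lyapunovRemainder l (s t) (p t) (U t) := by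
        rw [lyapunovRate_eq]; ring
    _ ≤ 0 + V t * C := add_le_add
        (neg_nonpos.2 (mul_nonneg (by linarith) (h.mul_one_sub_V_pos t).le))
        (mul_le_mul_of_nonneg_left hrem' (h.V_mem t).1.le)
    _ = (C • V) t := by simp [mul_comm]

theorem tendsto_U_one_of_integrable (hl : -1 < l) (h : IsInteriorOrbit l s p U V)
    (hs : s =O[atTop] (1 : ℝ → ℝ)) (hp : p =O[atTop] (1 : ℝ → ℝ))
    (hV : IntegrableAtFilter V atTop) : Tendsto U atTop (𝓝 1) := by
  refine tendsto_one_of_tendsto_logit_atTop h.U_mem ?_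
  obtain ⟨K, hK⟩ := h.isBoundedUnder_neg_lyapunov_of_integrable hl hs hp hV
  have hVbot : Tendsto (fun t ↦ logit (V t)) atTop atBot :=
    tendsto_logit_atBot h.V_mem (h.tendsto_V_zero_of_integrable hs hp hV)
  refine tendsto_atTop_mono' _ ((eventually_map.1 hK).mono fun t ht ↦ ?_)
    (tendsto_atTop_add_const_left _ (-K)
      (tendsto_neg_atBot_atTop.comp (hVbot.const_mul_atBot (by linarith : 0 < 3 + 2 * l))))
  unfold lyapunov at ht
  simp only [Function.comp_apply]
  linarith

theorem tendsto_vRate_one (h : IsInteriorOrbit l s p U V) (hs : s =O[atTop] (1 : ℝ → ℝ))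
    (hp : p =O[atTop] (1 : ℝ → ℝ)) (hU : Tendsto U atTop (𝓝 1)) (hV : Tendsto V atTop (𝓝 0)) :
    Tendsto (fun t ↦ vRate (s t) (p t) (U t) (V t)) atTop (𝓝 1) := by
  have hcoeff : (fun t ↦ 2 * s t * (2 * U t - 1) + p t * (1 - U t + s t * U t))
      =O[atTop] (1 : ℝ → ℝ) :=
    h.isBigO_one hs hp
      (φ := fun x ↦ 2 * x.1 * (2 * x.2.2.1 - 1) + x.2.1 * (1 - x.2.2.1 + x.1 * x.2.2.1))
      (by fun_prop)
  have hsmall := ((isLittleO_one_iff ℝ).2 hV).mul_isBigO hcoeff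
  simp only [Pi.one_apply, mul_one, isLittleO_one_iff] at hsmall
  have hlim := (((hU.const_mul 2).sub_const 1).mul (hV.const_sub 1)).add hsmall
  convert hlim using 2
  · unfold vRate H
    ring
  · norm_num

theorem not_integrableAtFilter_V (hl : -1 < l) (h : IsInteriorOrbit l s p U V)
    (hs : s =O[atTop] (1 : ℝ → ℝ)) (hp : p =O[atTop] (1 : ℝ → ℝ)) :
    ¬ IntegrableAtFilter V atTop := by
  intro hV
  have hV₀ : Tendsto V atTop (𝓝 0) := h.tendsto_V_zero_of_integrable hs hp hV
  have hU₁ : Tendsto U atTop (𝓝 1) := h.tendsto_U_one_of_integrable hl hs hp hV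
  have hrate : ∀ᶠ t in atTop, -vRate (s t) (p t) (U t) (V t) ≤ 0 :=
    ((h.tendsto_vRate_one hs hp hU₁ hV₀).eventually_const_le zero_lt_one).mono
      fun t ht ↦ neg_nonpos.2 ht
  have hbdd : IsBoundedUnder (· ≤ ·) atTop fun t ↦ -logit (V t) :=
    isBoundedUnder_le_of_deriv_le_of_integrable (f := 0)
      (.of_forall fun t ↦ (h.hasDerivAt_logit_V t).neg) hrate ⟨univ, univ_mem, integrableOn_zero⟩
  exact not_isBoundedUnder_of_tendsto_atTop
    (tendsto_neg_atBot_atTop.comp (tendsto_logit_atBot h.V_mem hV₀)) hbdd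

theorem tendsto_mul_one_sub_V_zero (h : IsInteriorOrbit l s p U V)
    (hs : s =O[atTop] (1 : ℝ → ℝ)) (hp : p =O[atTop] (1 : ℝ → ℝ))
    (hint : IntegrableAtFilter (fun t ↦ U t * (1 - V t)) atTop) :
    Tendsto (fun t ↦ U t * (1 - V t)) atTop (𝓝 0) := by
  have hrate : (fun t ↦
      (1 - U t) * uRate l (s t) (p t) (U t) (V t) - V t * vRate (s t) (p t) (U t) (V t))
      =O[atTop] (1 : ℝ → ℝ) :=
    h.isBigO_one hs hp (φ := fun x ↦ (1 - x.2.2.1) * uRate l x.1 x.2.1 x.2.2.1 x.2.2.2 -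
      x.2.2.2 * vRate x.1 x.2.1 x.2.2.1 x.2.2.2) (by unfold uRate vRate H; fun_prop)
  have hderiv (t : ℝ) : HasDerivAt (fun t ↦ U t * (1 - V t)) (U t * (1 - V t) *
      ((1 - U t) * uRate l (s t) (p t) (U t) (V t) - V t * vRate (s t) (p t) (U t) (V t))) t :=
    ((h.hasDerivAt_U t).fun_mul ((h.hasDerivAt_V t).const_sub 1)).congr_deriv (by ring)
  refine tendsto_zero_of_integrableAtFilter_of_deriv_isBigO_self
    (.of_forall fun t ↦ (hderiv t).differentiableAt) ?_ hint
  rw [funext fun t ↦ (hderiv t).deriv]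
  simpa only [Pi.one_apply, mul_one] using
    (isBigO_refl (fun t ↦ U t * (1 - V t)) atTop).mul hrate

theorem integrableAtFilter_mul_one_sub_V (hl : -1 < l) (h : IsInteriorOrbit l s p U V)
    (hs : ∀ᶠ t in atTop, 0 ≤ s t)
    (hsp : ∀ᶠ t in atTop, 1 + (7 + 4 * l) * s t ≤ (4 + 2 * l) * p t)
    (hW : IsBoundedUnder (· ≤ ·) atTop fun t ↦ lyapunov l (U t) (V t)) :
    IntegrableAtFilter (fun t ↦ U t * (1 - V t)) atTop := by
  have hl' : 0 < 2 + 2 * l := by linarith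
  have hrate_ge : ∀ᶠ t in atTop,
      (2 + 2 * l) * (U t * (1 - V t)) ≤ lyapunovRate l (s t) (p t) (U t) (V t) :=
    (hs.and hsp).mono fun t ht ↦ le_lyapunovRate hl (h.U_mem t) (h.V_mem t).1.le ht.1 ht.2
  have hint : IntegrableAtFilter (fun t ↦ lyapunovRate l (s t) (p t) (U t) (V t)) atTop :=
    integrableAtFilter_deriv_of_nonneg (.of_forall h.hasDerivAt_lyapunov)
      (hrate_ge.mono fun t ht ↦ (mul_pos hl' (h.mul_one_sub_V_pos t)).le.trans ht) hW
  have hcont : Continuous fun t ↦ U t * (1 - V t) :=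
    h.continuous_U.mul (continuous_const.sub h.continuous_V)
  refine IsBigO.integrableAtFilter (.of_bound (2 + 2 * l)⁻¹ (hrate_ge.mono fun t ht ↦ ?_))
    (hcont.stronglyMeasurableAtFilter _ _) hint
  rw [Real.norm_of_nonneg (h.mul_one_sub_V_pos t).le, le_inv_mul_iff₀ hl']
  exact ht.trans (Real.le_norm_self _)

theorem eventually_le_logit_V_of_le_lyapunov (hl : -1 < l) (h : IsInteriorOrbit l s p U V)
    (hU₀ : Tendsto (fun t ↦ U t * (1 - V t)) atTop (𝓝 0)) {w : ℝ}
    (hw : ∀ᶠ t in atTop, w ≤ lyapunov l (U t) (V t)) (b : ℝ) :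
    ∀ᶠ t in atTop, b ≤ logit (V t) := by
  let a := w - (3 + 2 * l) * b
  have hpos : 0 < Real.sigmoid a * (1 - Real.sigmoid b) :=
    mul_pos (Real.sigmoid_pos a) (sub_pos.2 (Real.sigmoid_lt_one b))
  filter_upwards [hw, hU₀.eventually_lt_const hpos] with t hwt ht
  by_contra! hb
  have hU : Real.sigmoid a ≤ U t :=
    sigmoid_le_of_le_lyapunov hl (h.U_mem t) (by linarith only [hwt]) hb.le
  have hV : V t ≤ Real.sigmoid b := (logit_le_iff_le_sigmoid (h.V_mem t)).1 hb.le
  exact ht.not_ge (mul_le_mul hU (sub_le_sub_left hV 1)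
    (sub_pos.2 (Real.sigmoid_lt_one b)).le (h.U_mem t).1.le)

theorem eventually_le_logit_V_of_tendsto_lyapunov_atTop (hl : -1 < l)
    (h : IsInteriorOrbit l s p U V) (hs : ∀ᶠ t in atTop, 0 ≤ s t) (hp : ∀ᶠ t in atTop, 0 ≤ p t)
    (hW : Tendsto (fun t ↦ lyapunov l (U t) (V t)) atTop atTop) (b : ℝ) :
    ∀ᶠ t in atTop, b ≤ logit (V t) := by
  have h₁ : 2⁻¹ < Real.sigmoid 1 := Real.sigmoid_zero ▸ Real.sigmoid_lt zero_lt_one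
  have hc : 0 < (2 * Real.sigmoid 1 - 1) * (1 - Real.sigmoid b) :=
    mul_pos (by linarith) (sub_pos.2 (Real.sigmoid_lt_one b))
  refine eventually_ge_of_le_deriv_of_le hc (.of_forall h.hasDerivAt_logit_V) ?_
  filter_upwards [hs, hp, hW.eventually_ge_atTop (1 + (3 + 2 * l) * b)] with t hst hpt hwt hb
  have hU : Real.sigmoid 1 ≤ U t := sigmoid_le_of_le_lyapunov hl (h.U_mem t) hwt hb
  have hV : V t ≤ Real.sigmoid b := (logit_le_iff_le_sigmoid (h.V_mem t)).1 hb
  calc (2 * Real.sigmoid 1 - 1) * (1 - Real.sigmoid b)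
      ≤ (2 * U t - 1) * (1 - V t) := mul_le_mul (by linarith) (sub_le_sub_left hV 1)
        (sub_pos.2 (Real.sigmoid_lt_one b)).le (by linarith)
    _ ≤ vRate (s t) (p t) (U t) (V t) :=
        le_vRate (by linarith) (h.U_mem t).2.le (h.V_mem t).1.le hst hpt

theorem tendsto_V_one (hl : -1 < l) (h : IsInteriorOrbit l s p U V)
    (hp : p =O[atTop] (1 : ℝ → ℝ)) (hs : ∀ᶠ t in atTop, 0 ≤ s t)
    (hsp : ∀ᶠ t in atTop, 1 + (7 + 4 * l) * s t ≤ (4 + 2 * l) * p t) : Tendsto V atTop (𝓝 1) := by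
  refine tendsto_one_of_tendsto_logit_atTop h.V_mem (tendsto_atTop.2 fun b ↦ ?_)
  have hle : ∀ᶠ t in atTop, s t ≤ p t := (hs.and hsp).mono fun t ht ↦ by nlinarith [ht.1, ht.2]
  have hrate_nonneg : ∀ᶠ t in atTop, 0 ≤ lyapunovRate l (s t) (p t) (U t) (V t) :=
    (hs.and hsp).mono fun t ht ↦ (mul_nonneg (by linarith) (h.mul_one_sub_V_pos t).le).trans
      (le_lyapunovRate hl (h.U_mem t) (h.V_mem t).1.le ht.1 ht.2)
  rcases tendsto_atTop_or_exists_tendsto_of_deriv_nonneg (.of_forall h.hasDerivAt_lyapunov)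
    hrate_nonneg with hW | ⟨L, hW⟩
  · exact h.eventually_le_logit_V_of_tendsto_lyapunov_atTop hl hs
      ((hs.and hle).mono fun t ht ↦ ht.1.trans ht.2) hW b
  · have hsO : s =O[atTop] p := .of_bound' ((hs.and hle).mono fun t ht ↦ by
      simpa only [Real.norm_of_nonneg ht.1] using ht.2.trans (Real.le_norm_self _))
    have hU₀ := h.tendsto_mul_one_sub_V_zero (hsO.trans hp) hp
      (h.integrableAtFilter_mul_one_sub_V hl hs hsp hW.isBoundedUnder_le)
    exact h.eventually_le_logit_V_of_le_lyapunov hl hU₀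
      (hW.eventually_const_le (sub_one_lt L)) b

end IsInteriorOrbit

variable {l : ℝ} {σ σ' φ g E U V : ℝ → ℝ}

theorem antitone_of_hasDerivAt_comp (hσ : ∀ η, 0 < η → 0 < σ η) (hg : ∀ η, 0 < η → 0 < g η)
    (hφ : StrictMonoOn φ (Ioi 0)) (hE : ∀ t, 0 < E t)
    (hU : ∀ t, U t ∈ Ioo 0 1) (hV : ∀ t, V t ∈ Ioo 0 1)
    (hφE : ∀ t, HasDerivAt (φ ∘ E) (-(g (E t) * H (σ (E t)) (U t) (V t))) t) : Antitone E := by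
  have hanti : Antitone (φ ∘ E) := by
    refine antitone_of_deriv_nonpos (fun t ↦ (hφE t).differentiableAt) fun t ↦ ?_
    rw [(hφE t).deriv]
    exact neg_nonpos.2 (mul_nonneg (hg _ (hE t)).le
      (H_nonneg (hσ _ (hE t)).le (Ioo_subset_Icc_self (hU t)) (hV t).1.le))
  exact fun t₁ t₂ ht ↦ (hφ.le_iff_le (hE t₂) (hE t₁)).1 (hanti ht)

theorem not_tendsto_E_of_pos (hl : -1 < l) (hσ : ContinuousOn σ (Ioi 0))
    (hσ' : ContinuousOn σ' (Ioi 0)) (hg : ContinuousOn g (Ioi 0))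
    (hσpos : ∀ η, 0 < η → 0 < σ η) (hgpos : ∀ η, 0 < η → 0 < g η) (hφ : MonotoneOn φ (Ioi 0))
    (h : IsInteriorOrbit l (σ ∘ E) (σ' ∘ E) U V)
    (hφE : ∀ t, HasDerivAt (φ ∘ E) (-(g (E t) * H (σ (E t)) (U t) (V t))) t)
    {L : ℝ} (hL : 0 < L) : ¬ Tendsto E atTop (𝓝 L) := by
  intro hE
  have tendsto_comp {f : ℝ → ℝ} (hf : ContinuousOn f (Ioi 0)) :
      Tendsto (f ∘ E) atTop (𝓝 (f L)) :=
    (hf.continuousAt (Ioi_mem_nhds hL)).tendsto.comp hE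
  obtain ⟨c, hc, hcL⟩ : ∃ c, 0 < c ∧ c < g L * min 1 (σ L) :=
    exists_between (mul_pos (hgpos L hL) (lt_min zero_lt_one (hσpos L hL)))
  have hcoeff : ∀ᶠ t in atTop, c ≤ g (E t) * min 1 (σ (E t)) :=
    ((tendsto_comp hg).mul (tendsto_const_nhds.min (tendsto_comp hσ))).eventually_const_le hcL
  have hEL : ∀ᶠ t in atTop, L / 2 ≤ E t := hE.eventually_const_le (half_lt_self hL)
  have hH : ∀ᶠ t in atTop, c * V t ≤ g (E t) * H (σ (E t)) (U t) (V t) := by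
    filter_upwards [hcoeff, hEL] with t hct htL
    calc c * V t ≤ g (E t) * min 1 (σ (E t)) * V t :=
          mul_le_mul_of_nonneg_right hct (h.V_mem t).1.le
      _ = g (E t) * (min 1 (σ (E t)) * V t) := mul_assoc ..
      _ ≤ g (E t) * H (σ (E t)) (U t) (V t) :=
          mul_le_mul_of_nonneg_left (min_one_mul_le_H (h.U_mem t) (h.V_mem t).1.le)
            (hgpos _ (by linarith)).le
  have hint : IntegrableAtFilter (fun t ↦ g (E t) * H (σ (E t)) (U t) (V t)) atTop := by
    refine integrableAtFilter_deriv_of_nonneg (.of_forall fun t ↦ (hφE t).neg.congr_deriv ?_)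
      (hH.mono fun t ht ↦ (mul_pos hc (h.V_mem t).1).le.trans ht)
      (isBoundedUnder_of_eventually_le (a := -φ (L / 2)) (hEL.mono fun t ht ↦ ?_))
    · exact neg_neg _
    · exact neg_le_neg (hφ (half_pos hL) ((half_pos hL).trans_le ht) ht)
  refine h.not_integrableAtFilter_V hl ((tendsto_comp hσ).isBigO_one ℝ)
    ((tendsto_comp hσ').isBigO_one ℝ) (IsBigO.integrableAtFilter
      (.of_bound c⁻¹ (hH.mono fun t ht ↦ ?_)) (h.continuous_V.stronglyMeasurableAtFilter _ _) hint)
  rw [Real.norm_of_nonneg (h.V_mem t).1.le, le_inv_mul_iff₀ hc]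
  exact ht.trans (Real.le_norm_self _)

theorem tendsto_E_nhdsGT_zero (hl : -1 < l) (hσ : ContinuousOn σ (Ioi 0))
    (hσ' : ContinuousOn σ' (Ioi 0)) (hg : ContinuousOn g (Ioi 0))
    (hσpos : ∀ η, 0 < η → 0 < σ η) (hgpos : ∀ η, 0 < η → 0 < g η)
    (hφ : StrictMonoOn φ (Ioi 0)) (hE : ∀ t, 0 < E t)
    (h : IsInteriorOrbit l (σ ∘ E) (σ' ∘ E) U V)
    (hφE : ∀ t, HasDerivAt (φ ∘ E) (-(g (E t) * H (σ (E t)) (U t) (V t))) t) :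
    Tendsto E atTop (𝓝[>] 0) := by
  have hlim : Tendsto E atTop (𝓝 (⨅ t, E t)) :=
    tendsto_atTop_ciInf (antitone_of_hasDerivAt_comp hσpos hgpos hφ hE h.U_mem h.V_mem hφE)
      ⟨0, forall_mem_range.2 fun t ↦ (hE t).le⟩
  have hinf : ⨅ t, E t = 0 := (le_ciInf fun t ↦ (hE t).le).antisymm' <| not_lt.1 fun hpos ↦
    not_tendsto_E_of_pos hl hσ hσ' hg hσpos hgpos hφ.monotoneOn h hφE hpos hlim
  exact tendsto_nhdsWithin_iff.2 ⟨hinf ▸ hlim, .of_forall hE⟩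

theorem tendsto_E_nhdsGT_zero_of_compactified {ω F Ω : ℝ → ℝ} (hl : -1 < l)
    (hσ : ContinuousOn σ (Ioi 0)) (hσ' : ContinuousOn σ' (Ioi 0)) (hF : ContinuousOn F (Ioi 0))
    (hσpos : ∀ η, 0 < η → 0 < σ η) (hFpos : ∀ η, 0 < η → 0 < F η)
    (hω : ContinuousOn ω (Ioi 0)) (hωmono : StrictMonoOn ω (Ioi 0))
    (hωpos : ∀ η, 0 < η → 0 < ω η) (hE : ∀ t, 0 < E t)
    (h : IsInteriorOrbit l (σ ∘ E) (σ' ∘ E) U V) (hΩ : ∀ t, Ω t = ω (E t) / (1 + ω (E t)))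
    (hΩode : ∀ t, HasDerivAt Ω (-(Ω t * (1 - Ω t) * F (E t) * H (σ (E t)) (U t) (V t))) t) :
    Tendsto E atTop (𝓝[>] 0) := by
  let φ : ℝ → ℝ := fun η ↦ ω η / (1 + ω η)
  obtain rfl : Ω = φ ∘ E := funext hΩ
  have hφmono : StrictMonoOn φ (Ioi 0) := strictMonoOn_div_one_add.comp hωmono fun η hη ↦
    neg_one_lt_zero.trans (hωpos η hη)
  have hφcont : ContinuousOn φ (Ioi 0) := hω.div (continuousOn_const.add hω) fun η hη ↦
    (add_pos one_pos (hωpos η hη)).ne'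
  have hφpos : ∀ η, 0 < η → 0 < φ η * (1 - φ η) := fun η hη ↦
    have hden : 0 < 1 + ω η := add_pos one_pos (hωpos η hη)
    mul_pos (div_pos (hωpos η hη) hden) (sub_pos.2 ((div_lt_one hden).2 (lt_one_add _)))
  exact tendsto_E_nhdsGT_zero (g := fun η ↦ φ η * (1 - φ η) * F η) hl hσ hσ'
    ((hφcont.mul (continuousOn_const.sub hφcont)).mul hF) hσpos
    (fun η hη ↦ mul_pos (hφpos η hη) (hFpos η hη)) hφmono hE h hΩode

end EinsteinVlasov

open EinsteinVlasov in
theorem stmt3_general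
    (l : ℝ) (hl : -1 < l)
    (σ σ' : ℝ → ℝ)
    (hσderiv : ∀ η : ℝ, 0 < η → HasDerivAt σ (σ' η) η)
    (hσ'cont : ContinuousOn σ' (Ioi 0))
    (hσpos : ∀ η : ℝ, 0 < η → 0 < σ η)
    (hσ'bdd : IsBoundedUnder (· ≤ ·) (𝓝[>] 0) σ')
    (ω ω' : ℝ → ℝ)
    (hωderiv : ∀ η : ℝ, 0 < η → HasDerivAt ω (ω' η) η)
    (hω'cont : ContinuousOn ω' (Ioi 0))
    (hωpos : ∀ η : ℝ, 0 < η → 0 < ω η)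
    (hω0 : Tendsto ω (𝓝[>] 0) (𝓝 0))
    (F : ℝ → ℝ) (hFdef : ∀ η : ℝ, 0 < η → F η = σ η * (ω' η / ω η))
    (hFpos : ∀ η : ℝ, 0 < η → 0 < F η)
    (U V E Ω : ℝ → ℝ)
    (hΩdef : ∀ t : ℝ, Ω t = ω (E t) / (1 + ω (E t)))
    (hE : ∀ t : ℝ, 0 < E t)
    (horbit : IsInteriorOrbit l (σ ∘ E) (σ' ∘ E) U V)
    (hΩode : ∀ t : ℝ, HasDerivAt Ω (-(Ω t * (1 - Ω t) * F (E t) * H (σ (E t)) (U t) (V t))) t)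
    (hmain : ∀ᶠ η in 𝓝[>] 0, 1 / (4 + 2 * l) + (7 + 4 * l) / (4 + 2 * l) * σ η ≤ σ' η) :
    Tendsto Ω atTop (𝓝 0) ∧ Tendsto V atTop (𝓝 1) := by
  have hω'pos : ∀ η, 0 < η → 0 < ω' η := fun η hη ↦ (div_pos_iff_of_pos_right (hωpos η hη)).1
    ((pos_iff_pos_of_mul_pos (hFdef η hη ▸ hFpos η hη)).1 (hσpos η hη))
  have hωcont : ContinuousOn ω (Ioi 0) := HasDerivAt.continuousOn hωderiv
  have hσcont : ContinuousOn σ (Ioi 0) := HasDerivAt.continuousOn hσderiv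
  have hFcont : ContinuousOn F (Ioi 0) :=
    (hσcont.mul (hω'cont.div hωcont fun η hη ↦ (hωpos η hη).ne')).congr hFdef
  have hωmono : StrictMonoOn ω (Ioi 0) := strictMonoOn_of_deriv_pos (convex_Ioi 0) hωcont
    fun η hη ↦ by
      rw [interior_Ioi] at hη
      exact (hωderiv η hη).deriv ▸ hω'pos η hη
  have hE₀ : Tendsto E atTop (𝓝[>] 0) := tendsto_E_nhdsGT_zero_of_compactified hl hσcont hσ'cont
    hFcont hσpos hFpos hωcont hωmono hωpos hE horbit hΩdef hΩode
  have hsp : ∀ᶠ η in 𝓝[>] 0, 1 + (7 + 4 * l) * σ η ≤ (4 + 2 * l) * σ' η := by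
    filter_upwards [hmain] with η hη
    rwa [div_mul_eq_mul_div, ← add_div, div_le_iff₀' (by linarith)] at hη
  have hσ'nonneg : ∀ᶠ η in 𝓝[>] 0, 0 ≤ σ' η := by
    filter_upwards [hsp, self_mem_nhdsWithin] with η hη hη₀
    nlinarith [hσpos η hη₀]
  obtain ⟨K, hK⟩ := hσ'bdd
  have hσ'O : σ' =O[𝓝[>] 0] (1 : ℝ → ℝ) := .of_bound K <| by
    filter_upwards [hσ'nonneg, eventually_map.1 hK] with η hη hηK
    simpa [abs_of_nonneg hη] using hηK
  refine ⟨?_, horbit.tendsto_V_one hl (hσ'O.comp_tendsto hE₀)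
    (.of_forall fun t ↦ (hσpos _ (hE t)).le) (hE₀.eventually hsp)⟩
  have hω₀ : Tendsto (fun t ↦ ω (E t)) atTop (𝓝 0) := hω0.comp hE₀
  exact zero_div (1 + 0 : ℝ) ▸ (hω₀.div (hω₀.const_add 1) (by simp)).congr fun t ↦ (hΩdef t).symm

/-- If `σ' ≥ 1/(4+2l) + ((7+4l)/(4+2l))σ` on some `(0,η̂]`, then every interior orbit of the Einstein–Vlasov dynamical system satisfies `Ω → 0` and `V → 1` as `λ → +∞`. -/
theorem stmt3
    (l : ℝ) (hl : -1 < l)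
    (σ σ' : ℝ → ℝ)
    (hσderiv : ∀ η : ℝ, 0 < η → HasDerivAt σ (σ' η) η)
    (hσ'cont : ContinuousOn σ' (Ioi 0))
    (hσrange : ∀ η : ℝ, 0 < η → σ η ∈ Ioo 0 (1 / (3 + 2 * l)))
    (hσ0 : Tendsto σ (nhdsWithin 0 (Ioi 0)) (nhds 0))
    (k₁ k₂ : ℝ) (hk₁ : 0 < k₁) (hk₁₂ : k₁ < k₂)
    (hσ'near : ∃ η₀ > (0:ℝ), ∀ η ∈ Ioo (0:ℝ) η₀, σ' η ∈ Ioo k₁ k₂)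
    (ω ω' : ℝ → ℝ)
    (hωsmooth : ContDiffOn ℝ (⊤ : ℕ∞) ω (Ioi 0))
    (hωderiv : ∀ η : ℝ, 0 < η → HasDerivAt ω (ω' η) η)
    (hωpos : ∀ η : ℝ, 0 < η → 0 < ω η)
    (hωmono : StrictMonoOn ω (Ioi 0))
    (hω0 : Tendsto ω (nhdsWithin 0 (Ioi 0)) (nhds 0))
    (F : ℝ → ℝ) (hFdef : ∀ η : ℝ, 0 < η → F η = σ η * (ω' η / ω η))
    (Flo Fhi : ℝ) (hFlo : 0 < Flo)
    (hFbounds : ∀ η : ℝ, 0 < η → F η ∈ Icc Flo Fhi)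
    (U V E Ω : ℝ → ℝ)
    (hΩdef : ∀ t : ℝ, Ω t = ω (E t) / (1 + ω (E t)))
    (hU : ∀ t : ℝ, U t ∈ Ioo (0:ℝ) 1) (hV : ∀ t : ℝ, V t ∈ Ioo (0:ℝ) 1)
    (hE : ∀ t : ℝ, 0 < E t) (hEcont : Continuous E)
    (hUode : ∀ t : ℝ, HasDerivAt U
      (U t * (1 - U t) * ((3 + 2 * l - (4 + 2 * l) * U t) * (1 - V t)
        - (1 + σ (E t) - σ' (E t)) * ((1 - U t + σ (E t) * U t) * V t))) t)
    (hVode : ∀ t : ℝ, HasDerivAt V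
      (V t * (1 - V t) * ((2 * U t - 1) * (1 - V t + 2 * σ (E t) * V t)
        + σ' (E t) * ((1 - U t + σ (E t) * U t) * V t))) t)
    (hΩode : ∀ t : ℝ, HasDerivAt Ω
      (-(Ω t * (1 - Ω t) * F (E t) * ((1 - U t + σ (E t) * U t) * V t))) t)
    (ηhat : ℝ) (hηhat : 0 < ηhat)
    (hmain : ∀ η : ℝ, 0 < η → η ≤ ηhat →
      1 / (4 + 2 * l) + (7 + 4 * l) / (4 + 2 * l) * σ η ≤ σ' η) :
    Tendsto Ω atTop (nhds 0) ∧ Tendsto V atTop (nhds 1) := by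
  obtain ⟨η₀, hη₀, hσ'η₀⟩ := hσ'near
  have hσ'bdd : IsBoundedUnder (· ≤ ·) (𝓝[>] 0) σ' := isBoundedUnder_of_eventually_le (a := k₂)
    (by filter_upwards [Ioo_mem_nhdsGT hη₀] with η hη using (hσ'η₀ η hη).2.le)
  have hω'cont : ContinuousOn ω' (Ioi 0) :=
    (hωsmooth.continuousOn_deriv_of_isOpen isOpen_Ioi (by simp)).congr
      fun η hη ↦ (hωderiv η hη).deriv.symm
  exact stmt3_general l hl σ σ' hσderiv hσ'cont (fun η hη ↦ (hσrange η hη).1) hσ'bdd ω ω' hωderiv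
    hω'cont hωpos hω0 F hFdef (fun η hη ↦ hFlo.trans_le (hFbounds η hη).1) U V E Ω hΩdef hE
    ⟨hU, hV, hUode, hVode⟩ hΩode
    (by filter_upwards [Ioc_mem_nhdsGT hηhat] with η hη using hmain η hη.1 hη.2)
end
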